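/- arXiv:math/9811004 — 4 statements merged into one kernel-verified Lean document; each statement's English description precedes it below -/
import Mathlib

section
/- Let P be a finite p-group with p > f(P) + 1. Then the nilpotency class of P is at most f(P) + 1. -/
section CoexpPoly
open Subgroup
open scoped commutatorElement

theorem cx_three {G : Type*} [Group G] (H₁ H₂ H₃ N : Subgroup G) [N.Normal]
    (h1 : ⁅⁅H₂, H₃⁆, H₁⁆ ≤ N) (h2 : ⁅⁅H₃, H₁⁆, H₂⁆ ≤ N) : ⁅⁅H₁, H₂⁆, H₃⁆ ≤ N := by
  have key : ∀ K : Subgroup G, K ≤ N ↔ K.map (QuotientGroup.mk' N) = ⊥ := by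
    intro K
    rw [Subgroup.map_eq_bot_iff, QuotientGroup.ker_mk']
  rw [key] at *
  simp only [Subgroup.map_commutator] at *
  exact Subgroup.commutator_commutator_eq_bot_of_rotate h1 h2

theorem cx_lcs_comm {G : Type*} [Group G] (j : ℕ) : ∀ i : ℕ,
    ⁅(⊤ : Subgroup G).lowerCentralSeries i, (⊤ : Subgroup G).lowerCentralSeries j⁆ ≤
      (⊤ : Subgroup G).lowerCentralSeries (i + j + 1) := by
  induction j with
  | zero => intro i; exact le_rfl
  | succ j ih =>
    intro i
    rw [commutator_comm, Subgroup.lowerCentralSeries_succ]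
    apply cx_three
    · rw [commutator_comm ⊤, ← Subgroup.lowerCentralSeries_succ]
      refine (ih (i+1)).trans (le_of_eq ?_)
      congr 1; omega
    · exact commutator_mono (ih i) le_rfl

/-- Polynomial sequences up to order `M`. -/
def CxPoly {G : Type*} [Group G] (A : ℕ → Subgroup G) : ℕ → ℕ → (ℕ → G) → Prop
  | 0, k, g => ∀ n, g n ∈ A k
  | M + 1, k, g => (∀ n, g n ∈ A k) ∧ CxPoly A M (k + 1) (fun n => (g n)⁻¹ * g (n + 1))

variable {G : Type*} [Group G] {A : ℕ → Subgroup G}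

theorem CxPoly.val {M k : ℕ} {g : ℕ → G} (h : CxPoly A M k g) (n : ℕ) : g n ∈ A k := by
  cases M with
  | zero => exact h n
  | succ M => exact h.1 n

theorem CxPoly.down {M : ℕ} : ∀ {k : ℕ} {g : ℕ → G}, CxPoly A (M + 1) k g → CxPoly A M k g := by
  induction M with
  | zero => intro k g h; exact h.1
  | succ M ih => intro k g h; exact ⟨h.1, ih h.2⟩

theorem CxPoly.anti (hA : Antitone A) {M : ℕ} : ∀ {k l : ℕ} {g : ℕ → G}, l ≤ k →
    CxPoly A M k g → CxPoly A M l g := by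
  induction M with
  | zero => intro k l g hl h n; exact hA hl (h n)
  | succ M ih => intro k l g hl h; exact ⟨fun n => hA hl (h.1 n), ih (by omega) h.2⟩

theorem CxPoly.all (hA : Antitone A) (hc : ∀ i j, ⁅A i, A j⁆ ≤ A (i + j)) (M : ℕ) :
    (∀ k g h, CxPoly A M k g → CxPoly A M k h → CxPoly A M k (fun n => g n * h n)) ∧
    (∀ k g, CxPoly A M k g → CxPoly A M k (fun n => (g n)⁻¹)) ∧
    (∀ i j g h, CxPoly A M i g → CxPoly A M j h → CxPoly A M (i + j) (fun n => ⁅g n, h n⁆)) := by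
  induction M with
  | zero =>
    refine ⟨fun k g h hg hh n => mul_mem (hg n) (hh n), fun k g hg n => inv_mem (hg n),
      fun i j g h hg hh n => hc i j (commutator_mem_commutator (hg n) (hh n))⟩
  | succ M ih =>
    obtain ⟨hmul, hinv, hcom⟩ := ih
    have hconj : ∀ k r g t, CxPoly A M k g → CxPoly A M r t →
        CxPoly A M k (fun n => t n * g n * (t n)⁻¹) := by
      intro k r g t hg ht
      have := hmul k _ _ ((hcom r k t g ht hg).anti hA (by omega)) hg
      convert this using 2
      simp [commutatorElement_def]
    refine ⟨?_, ?_, ?_⟩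
    · intro k g h hg hh
      refine ⟨fun n => mul_mem (hg.1 n) (hh.1 n), ?_⟩
      have := hmul _ _ _ (hconj _ _ _ _ hg.2 (hinv _ _ hh.down)) hh.2
      convert this using 2
      group
    · intro k g hg
      refine ⟨fun n => inv_mem (hg.1 n), ?_⟩
      have := hconj _ _ _ _ (hinv _ _ hg.2) hg.down
      convert this using 2
      group
    · intro i j g h hg hh
      refine ⟨fun n => hc i j (commutator_mem_commutator (hg.1 n) (hh.1 n)), ?_⟩
      have hk := hinv _ _ (hcom i j g h hg.down hh.down)
      have hw := hmul _ _ _ hh.down (hh.2.anti hA (Nat.le_succ j))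
      have h1 := hconj _ _ _ _ (hconj _ _ _ _ (hcom _ _ _ _ hg.2 hw) hg.down) hk
      have h2 := hconj _ _ _ _ (hcom _ _ _ _ hg.down hh.2) hh.down
      have := hmul _ _ _ (h1.anti hA (l := i + j + 1) (by omega)) h2
      convert this using 2
      simp only [commutatorElement_def]
      group

theorem CxPoly.choose {M : ℕ} (hA : Antitone A) : ∀ {k m : ℕ} {h : G}, h ∈ A (k + m) →
    CxPoly A M k (fun n => h ^ (n.choose m)) := by
  induction M with
  | zero => intro k m h hh n; exact pow_mem (hA (by omega) hh) _
  | succ M ih =>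
    intro k m h hh
    refine ⟨fun n => pow_mem (hA (by omega) hh) _, ?_⟩
    cases m with
    | zero =>
      have := ih (k := k + 1) (m := 0) (h := 1) (one_mem _)
      simpa using this
    | succ m =>
      have := ih (k := k + 1) (m := m) (h := h) (by convert hh using 2; omega)
      convert this using 2
      simp only
      rw [Nat.choose_succ_succ', Nat.add_comm (Nat.choose _ m), pow_add]
      simp

theorem CxPoly.first (i : ℕ) : ∀ {k : ℕ} {g : ℕ → G}, CxPoly A i k g → (∀ n < i, g n = 1) →
    g i ∈ A (k + i) := by
  induction i with
  | zero => intro k g hg _; exact hg 0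
  | succ i ih =>
    intro k g hg h1
    have := ih hg.2 (fun n hn => by simp [h1 n (by omega), h1 (n+1) (by omega)])
    simp only [h1 i (by omega), inv_one, one_mul] at this
    convert this using 2; omega

theorem CxPoly.eval (hA : Antitone A) (hc : ∀ i j, ⁅A i, A j⁆ ≤ A (i + j)) (c q : ℕ)
    (hbot : A (c + 1) = ⊥) (hq : ∀ i h, 2 ≤ i → i ≤ c → h ∈ A i → h ^ (q.choose i) = 1) (d : ℕ) :
    ∀ g : ℕ → G, 2 ≤ c + 1 - d → (∀ M, CxPoly A M 0 g) → (∀ n < c + 1 - d, g n = 1) → g q = 1 := by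
  induction d with
  | zero =>
    intro g _ hg h1
    have : ∀ n, g n = 1 := by
      intro n
      induction n using Nat.strong_induction_on with
      | _ n ih =>
        by_cases hn : n < c + 1
        · exact h1 n hn
        · have := (hg n).first n ih
          have := hA (show c + 1 ≤ 0 + n by omega) this
          rw [hbot] at this
          exact this
    exact this q
  | succ d ih =>
    intro g hd hg h1
    set i := c + 1 - (d + 1) with hi
    have hgi := (hg i).first i h1
    rw [zero_add] at hgi
    have := ih (fun n => (g i)⁻¹ ^ (n.choose i) * g n) (by omega)
      (fun M => (CxPoly.all hA hc M).1 _ _ _ (CxPoly.choose hA (by simpa using hgi)) (hg M)) ?_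
    · simpa [hq i _ hd (by omega) hgi] using this
    · intro n hn
      rcases lt_or_eq_of_le (show n ≤ i by omega) with h | h
      · simp [Nat.choose_eq_zero_of_lt h, h1 n h]
      · simp [h]

end CoexpPoly

section CoexpPow
open Subgroup
open scoped commutatorElement

theorem cx_dvd_choose {p k i : ℕ} (hp : p.Prime) (h1 : 1 ≤ i) (h2 : i < p) :
    p ^ k ∣ (p ^ k).choose i := by
  have h := Nat.add_one_mul_choose_eq (p ^ k - 1) (i - 1)
  have hpos : 0 < p ^ k := pow_pos hp.pos k
  rw [show p ^ k - 1 + 1 = p ^ k by omega, show i - 1 + 1 = i by omega] at h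
  have hco : Nat.Coprime (p ^ k) i := by
    apply Nat.Coprime.pow_left
    exact (Nat.Prime.coprime_iff_not_dvd hp).2 (fun h => by have := Nat.le_of_dvd h1 h; omega)
  exact hco.dvd_of_dvd_mul_right (h ▸ dvd_mul_right _ _)

theorem cx_pow_hom {G : Type*} [Group G] {p k : ℕ} (hp : p.Prime)
    (hcl : (⊤ : Subgroup G).lowerCentralSeries (p - 1) = ⊥)
    (hk : ∀ h ∈ (⊤ : Subgroup G).lowerCentralSeries 1, h ^ (p ^ k) = 1) (a b : G) :
    (a * b) ^ (p ^ k) = a ^ (p ^ k) * b ^ (p ^ k) := by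
  have h2 := hp.two_le
  let A : ℕ → Subgroup G := fun n => (⊤ : Subgroup G).lowerCentralSeries (n - 1)
  have hA : Antitone A := fun i j h => Subgroup.lowerCentralSeries_antitone _ (Nat.sub_le_sub_right h 1)
  have hc : ∀ i j, ⁅A i, A j⁆ ≤ A (i + j) := by
    intro i j
    rcases Nat.eq_zero_or_pos i with rfl | hi
    · rw [zero_add]
      exact commutator_le_right _ _
    rcases Nat.eq_zero_or_pos j with rfl | hj
    · exact commutator_le_left _ _
    refine (cx_lcs_comm _ _).trans (le_of_eq ?_)
    show _ = Subgroup.lowerCentralSeries _ _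
    congr 1; omega
  have hpow : ∀ (x : G) M, CxPoly A M 0 (fun n => x ^ n) := by
    intro x M
    have := CxPoly.choose (A := A) (M := M) hA (k := 0) (m := 1) (h := x) (by simp [A])
    simpa using this
  have hg : ∀ M, CxPoly A M 0 (fun n => (a ^ n * b ^ n) * ((a * b) ^ n)⁻¹) := fun M =>
    (CxPoly.all hA hc M).1 _ _ _ ((CxPoly.all hA hc M).1 _ _ _ (hpow a M) (hpow b M))
      ((CxPoly.all hA hc M).2.1 _ _ (hpow _ M))
  have := CxPoly.eval hA hc (p - 1) (p ^ k) (by simpa [A] using hcl) ?_ (p - 2) _ (by omega) hg ?_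
  · exact (mul_inv_eq_one.1 this).symm
  · intro i h hi1 hi2 hh
    obtain ⟨m, hm⟩ := cx_dvd_choose (k := k) hp (show 1 ≤ i by omega) (show i < p by omega)
    rw [hm, pow_mul, hk h (Subgroup.lowerCentralSeries_antitone _ (show 1 ≤ i - 1 by omega) hh), one_pow]
  · intro n hn
    have : n = 0 ∨ n = 1 := by omega
    rcases this with rfl | rfl <;> simp

theorem cx_pow_hom_pair {G : Type*} [Group G] {p k : ℕ} (hp : p.Prime)
    (hcl : (⊤ : Subgroup G).lowerCentralSeries (p - 1) = ⊥) (H : Subgroup G) [H.Normal]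
    (hk : ∀ h ∈ H, h ^ (p ^ k) = 1) (a b : G) (hab : ⁅a, b⁆ ∈ H) :
    (a * b) ^ (p ^ k) = a ^ (p ^ k) * b ^ (p ^ k) := by
  let K : Subgroup G := closure {a, b}
  have ha : a ∈ K := subset_closure (by simp)
  have hb : b ∈ K := subset_closure (by simp)
  have hKK : ⁅K, K⁆ ≤ H := by
    have hq : (QuotientGroup.mk' H a) * (QuotientGroup.mk' H b) =
        (QuotientGroup.mk' H b) * (QuotientGroup.mk' H a) := by
      rw [← commutatorElement_eq_one_iff_mul_comm, ← map_commutatorElement]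
      exact (QuotientGroup.eq_one_iff _).2 hab
    have : (⁅K, K⁆).map (QuotientGroup.mk' H) = ⊥ := by
      rw [map_commutator, commutator_self_eq_bot_iff, MonoidHom.map_closure]
      apply Subgroup.isMulCommutative_closure
      rintro _ ⟨x, hx, rfl⟩ _ ⟨y, hy, rfl⟩
      simp only [Set.mem_insert_iff, Set.mem_singleton_iff] at hx hy
      rcases hx with rfl | rfl <;> rcases hy with rfl | rfl <;> first | rfl | exact hq | exact hq.symm
    rwa [Subgroup.map_eq_bot_iff, QuotientGroup.ker_mk'] at this
  have := cx_pow_hom (G := K) (k := k) hp ?_ ?_ ⟨a, ha⟩ ⟨b, hb⟩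
  · simpa [Subtype.ext_iff] using this
  · rw [← map_subtype_inj, Subgroup.map_bot, top_subtype_lowerCentralSeries, eq_bot_iff, ← hcl]
    exact Subgroup.lowerCentralSeries_mono _ le_top
  · intro h hh
    have : (h : G) ∈ K.lowerCentralSeries 1 := by
      rw [← top_subtype_lowerCentralSeries]
      exact mem_map_of_mem K.subtype hh
    exact Subtype.ext (by simpa using hk _ (hKK this))

theorem cx_comm_pow {G : Type*} [Group G] {p k : ℕ} (hp : p.Prime)
    (hcl : (⊤ : Subgroup G).lowerCentralSeries (p - 1) = ⊥) (j : ℕ)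
    (hj : ∀ h ∈ (⊤ : Subgroup G).lowerCentralSeries (j + 2), h ^ (p ^ k) = 1) (a b : G)
    (ha : a ∈ (⊤ : Subgroup G).lowerCentralSeries j) :
    ⁅a, b⁆ ^ (p ^ k) = ⁅a ^ (p ^ k), b⁆ := by
  have hc : ⁅a, b⁆ ∈ (⊤ : Subgroup G).lowerCentralSeries (j + 1) :=
    commutator_mem_commutator ha (mem_top b)
  have h := cx_pow_hom_pair (k := k) hp hcl _ hj ⁅a, b⁆ (b * a * b⁻¹)
    (commutator_mem_commutator hc (mem_top _))
  rw [show ⁅a, b⁆ * (b * a * b⁻¹) = a by simp [commutatorElement_def, mul_assoc], conj_pow] at h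
  rw [commutatorElement_def (a ^ (p ^ k)) b]
  rw [eq_mul_inv_of_mul_eq h.symm]
  simp [mul_assoc]

theorem cx_central_pow {G : Type*} [Group G] {p k : ℕ} (hp : p.Prime)
    (hcl : (⊤ : Subgroup G).lowerCentralSeries (p - 1) = ⊥) (i : ℕ)
    (hi : ∀ a ∈ (⊤ : Subgroup G).lowerCentralSeries i, a ^ (p ^ k) ∈ center G) :
    ∀ a ∈ (⊤ : Subgroup G).lowerCentralSeries (i + 1), a ^ (p ^ k) = 1 := by
  have main : ∀ d j, i + 1 ≤ j → p - 1 ≤ j + d →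
      ∀ a ∈ (⊤ : Subgroup G).lowerCentralSeries j, a ^ (p ^ k) = 1 := by
    intro d
    induction d with
    | zero =>
      intro j _ hj a ha
      have := Subgroup.lowerCentralSeries_antitone _ hj ha
      rw [hcl] at this
      rw [Subgroup.mem_bot.1 this, one_pow]
    | succ d ih =>
      intro j hij hj a ha
      obtain ⟨j, rfl⟩ : ∃ j', j = j' + 1 := ⟨j - 1, by omega⟩
      have h2 := ih (j + 2) (by omega) (by omega)
      rw [Subgroup.mem_lowerCentralSeries_succ_iff] at ha
      induction ha using closure_induction with
      | mem x hx =>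
        obtain ⟨u, hu, v, -, rfl⟩ := hx
        rw [cx_comm_pow hp hcl j h2 u v hu, commutatorElement_eq_one_iff_mul_comm]
        exact ((mem_center_iff.1 (hi u (Subgroup.lowerCentralSeries_antitone _ (by omega) hu))) v).symm
      | one => simp
      | mul x y hx hy h1 h3 =>
        rw [cx_pow_hom_pair hp hcl _ h2 x y (commutator_mem_commutator hx (mem_top y)), h1, h3, one_mul]
      | inv x hx h1 => rw [inv_pow, h1, inv_one]
  exact main p (i + 1) le_rfl (by omega)

end CoexpPow
section CoexpPP
open Subgroup
open scoped commutatorElement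

theorem cx_order_p {p : ℕ} (hp : p.Prime) {P : Type*} [Group P] [Finite P] (hP : IsPGroup p P)
    {g : P} (hg : g ≠ 1) : ∃ k, orderOf (g ^ (p ^ k)) = p ∧ orderOf g = p ^ (k + 1) := by
  haveI := Fact.mk hp
  obtain ⟨m, hm⟩ := IsPGroup.iff_orderOf.1 hP g
  have : m ≠ 0 := by
    rintro rfl
    exact hg (orderOf_eq_one_iff.1 (by simpa using hm))
  obtain ⟨k, rfl⟩ := Nat.exists_eq_succ_of_ne_zero this
  refine ⟨k, ?_, hm⟩
  rw [orderOf_pow_of_dvd (pow_ne_zero _ hp.ne_zero) (by rw [hm]; exact pow_dvd_pow _ (by omega)), hm,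
    Nat.succ_eq_add_one, pow_succ, Nat.mul_div_cancel_left _ (pow_pos hp.pos k)]

theorem cx_meet {p : ℕ} (hp : p.Prime) {P : Type*} [Group P] [Finite P] (hP : IsPGroup p P)
    (H : Subgroup P) [H.Normal] (hH : H ≠ ⊥) : ∃ b ∈ H, b ∈ center P ∧ orderOf b = p := by
  haveI := Fact.mk hp
  have hc : p ∣ Nat.card H := by
    rcases (hP.to_subgroup H).card_eq_or_dvd with h | h
    · exact absurd (Subgroup.card_eq_one.1 h) hH
    · exact h
  obtain ⟨b, hb, hb1⟩ := (hP.of_equiv ConjAct.toConjAct).exists_fixed_point_of_prime_dvd_card_of_fixed_point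
    (α := H) hc (a := 1) (fun g => by simp)
  have hbc : (b : P) ∈ center P := by
    rw [mem_center_iff]
    intro g
    have := congrArg (Subtype.val) (hb (ConjAct.toConjAct g))
    rw [ConjAct.Subgroup.val_conj_smul, ConjAct.toConjAct_smul] at this
    rw [← mul_inv_eq_iff_eq_mul]
    exact this
  have hb1' : (b : P) ≠ 1 := fun h => hb1 (Subtype.ext (by simpa using h.symm))
  obtain ⟨k, hk, -⟩ := cx_order_p hp hP hb1'
  exact ⟨_, pow_mem b.2 _, pow_mem hbc _, hk⟩

theorem cx_normal_p {p : ℕ} (hp : p.Prime) {P : Type*} [Group P] [Finite P] (hP : IsPGroup p P)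
    (T : Subgroup P) [T.Normal] (hT : Nat.card T ∣ p) : T ≤ center P := by
  by_cases h : T = ⊥
  · simp [h]
  obtain ⟨b, hb, hbc, hbo⟩ := cx_meet hp hP T h
  have h1 : zpowers b ≤ T := by simpa using hb
  have h2 : zpowers b = T := by
    apply Subgroup.eq_of_le_of_card_ge h1
    rw [Nat.card_zpowers, hbo]
    exact Nat.le_of_dvd hp.pos hT
  rw [← h2]
  simpa using hbc

theorem cx_normal_of_central {P : Type*} [Group P] {H : Subgroup P} (h : H ≤ center P) :
    H.Normal := by
  refine ⟨fun n hn g => ?_⟩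
  rw [mem_center_iff.1 (h hn) g]
  simpa using hn

theorem cx_lift {p : ℕ} (hp : p.Prime) {P : Type*} [Group P] [Finite P]
    (N : Subgroup P) [N.Normal] (hN : N ≤ center P) (hNc : Nat.card N = p) (w : P)
    (hw : w ^ p = 1) (hwN : w ∉ N) (hwc : (w : P ⧸ N) ∈ center (P ⧸ N)) :
    ∃ U : Subgroup P, U.Normal ∧ Nat.card U = p ^ 2 ∧ ∀ u ∈ U, u ^ p = 1 := by
  haveI := Fact.mk hp
  have hle : zpowers (w : P ⧸ N) ≤ center (P ⧸ N) := by simpa using hwc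
  haveI := cx_normal_of_central hle
  refine ⟨(zpowers (w : P ⧸ N)).comap (QuotientGroup.mk' N), inferInstance, ?_, ?_⟩
  · have ho : orderOf (w : P ⧸ N) = p := by
      apply orderOf_eq_prime
      · rw [← QuotientGroup.mk_pow, hw]; rfl
      · rwa [Ne, QuotientGroup.eq_one_iff]
    have h1 := Subgroup.card_mul_index ((zpowers (w : P ⧸ N)).comap (QuotientGroup.mk' N))
    rw [Subgroup.index_comap_of_surjective _ (QuotientGroup.mk'_surjective N)] at h1
    have h2 := Subgroup.card_mul_index (zpowers (w : P ⧸ N))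
    rw [Nat.card_zpowers, ho] at h2
    have h3 := Subgroup.card_eq_card_quotient_mul_card_subgroup N
    have h4 : (zpowers (w : P ⧸ N)).index ≠ 0 := Subgroup.index_ne_zero_of_finite
    apply Nat.eq_of_mul_eq_mul_right (Nat.pos_of_ne_zero h4)
    rw [h1, h3, ← h2, hNc]; ring
  · intro u hu
    rw [mem_comap, mem_zpowers_iff] at hu
    obtain ⟨i, hi⟩ := hu
    have hn : (w ^ i)⁻¹ * u ∈ N := by
      rw [← QuotientGroup.eq]
      simpa using hi
    have hnp : ((w ^ i)⁻¹ * u) ^ p = 1 := by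
      have := pow_card_eq_one' (x := (⟨_, hn⟩ : N))
      rw [hNc] at this
      simpa [Subtype.ext_iff] using this
    have hcomm : Commute (w ^ i) ((w ^ i)⁻¹ * u) := mem_center_iff.1 (hN hn) _
    have : u = w ^ i * ((w ^ i)⁻¹ * u) := by group
    rw [this, hcomm.mul_pow, hnp, mul_one, ← zpow_natCast, zpow_comm, zpow_natCast, hw, one_zpow]

theorem cx_pp {p : ℕ} (hp : p.Prime) (hp2 : 2 < p) : ∀ (m : ℕ) (P : Type) [Group P] [Finite P],
    Nat.card P = m → IsPGroup p P → ¬ IsCyclic P →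
    ∃ U : Subgroup P, U.Normal ∧ Nat.card U = p ^ 2 ∧ ∀ u ∈ U, u ^ p = 1 := by
  haveI := Fact.mk hp
  intro m
  induction m using Nat.strong_induction_on with
  | _ m ih =>
  intro P _ _ hm hP hcyc
  have hnt : (⊤ : Subgroup P) ≠ ⊥ := by
    intro h
    apply hcyc
    haveI : Subsingleton P := by rwa [← Subgroup.subsingleton_iff, ← subsingleton_iff_bot_eq_top, eq_comm]
    infer_instance
  obtain ⟨b, -, hbc, hbo⟩ := cx_meet hp hP ⊤ hnt
  obtain ⟨N, hNdef⟩ : ∃ N, N = zpowers b := ⟨_, rfl⟩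
  have hN : N ≤ center P := by rw [hNdef]; simpa using hbc
  have hNc : Nat.card N = p := by rw [hNdef, Nat.card_zpowers, hbo]
  haveI hNn := cx_normal_of_central hN
  have hQ : IsPGroup p (P ⧸ N) := hP.to_quotient N
  have hcard := Subgroup.card_eq_card_quotient_mul_card_subgroup N
  rw [hNc] at hcard
  have hNp : ∀ n ∈ N, n ^ p = 1 := by
    intro n hn
    have := pow_card_eq_one' (x := (⟨_, hn⟩ : N))
    rw [hNc] at this
    simpa [Subtype.ext_iff] using this
  by_cases hQc : IsCyclic (P ⧸ N)
  · obtain ⟨gb, hgb⟩ := hQc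
    obtain ⟨g, rfl⟩ := QuotientGroup.mk_surjective gb
    by_cases hg1 : g = 1
    · exfalso
      apply hcyc
      refine ⟨b, fun y => ?_⟩
      obtain ⟨i, hi⟩ := hgb (y : P ⧸ N)
      subst hg1
      have : (y : P ⧸ N) = 1 := by rw [← hi]; simp
      rw [QuotientGroup.eq_one_iff, hNdef] at this
      exact this
    obtain ⟨k, hk, -⟩ := cx_order_p hp hP hg1
    refine cx_lift hp N hN hNc (g ^ (p ^ k)) (by have := pow_orderOf_eq_one (g ^ (p ^ k)); rwa [hk] at this) ?_ ?_
    · intro hmem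
      apply hcyc
      have hNg : N ≤ zpowers g := by
        have h1 : zpowers (g ^ (p ^ k)) ≤ N := by simpa using hmem
        have h2 : zpowers (g ^ (p ^ k)) = N :=
          Subgroup.eq_of_le_of_card_ge h1 (by rw [Nat.card_zpowers, hk, hNc])
        rw [← h2]
        simp [pow_mem]
      refine ⟨g, fun y => ?_⟩
      obtain ⟨i, hi⟩ := hgb (y : P ⧸ N)
      have hn : (g ^ i)⁻¹ * y ∈ N := by
        rw [← QuotientGroup.eq]
        simpa using hi
      have := mul_mem (zpow_mem (mem_zpowers g) i) (hNg hn)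
      rw [mul_inv_cancel_left] at this
      exact this
    · rw [mem_center_iff]
      intro y
      obtain ⟨i, rfl⟩ := hgb y
      simp only [QuotientGroup.mk_pow]
      exact ((Commute.refl (g : P ⧸ N)).zpow_left i).pow_right _
  · have hlt : Nat.card (P ⧸ N) < m := by
      rw [← hm, hcard]
      exact lt_mul_of_one_lt_right Nat.card_pos hp.one_lt
    obtain ⟨V, hV, hVc, hVp⟩ := ih _ hlt (P ⧸ N) rfl hQ hQc
    let E : Subgroup P := V.comap (QuotientGroup.mk' N)
    have hVcomm : ⁅V, V⁆ = ⊥ := by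
      rw [commutator_self_eq_bot_iff]
      exact IsPGroup.isMulCommutative_of_card_eq_prime_sq hVc
    have hEE : ⁅E, E⁆ ≤ N := by
      rw [← QuotientGroup.ker_mk' N, ← Subgroup.map_eq_bot_iff, map_commutator, eq_bot_iff, ← hVcomm]
      exact commutator_mono (map_comap_le _ _) (map_comap_le _ _)
    have hEc : Nat.card E = p ^ 3 := by
      have h1 := Subgroup.card_mul_index E
      rw [Subgroup.index_comap_of_surjective _ (QuotientGroup.mk'_surjective N)] at h1
      have h2 := Subgroup.card_mul_index V
      have h4 : V.index ≠ 0 := Subgroup.index_ne_zero_of_finite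
      apply Nat.eq_of_mul_eq_mul_right (Nat.pos_of_ne_zero h4)
      rw [h1, hcard, ← h2, hVc]; ring
    have hl1 : ∀ h ∈ (⊤ : Subgroup E).lowerCentralSeries 1, (h : P) ∈ N := by
      intro h hh
      have : (h : P) ∈ E.lowerCentralSeries 1 := by
        rw [← top_subtype_lowerCentralSeries]
        exact mem_map_of_mem E.subtype hh
      exact hEE this
    have hpow : ∀ u v : E, (u * v) ^ p = u ^ p * v ^ p := by
      have := cx_pow_hom (G := E) (k := 1) hp ?_ ?_
      · simpa using this
      · rw [eq_bot_iff]
        refine (Subgroup.lowerCentralSeries_antitone _ (show 2 ≤ p - 1 by omega)).trans ?_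
        rw [Subgroup.lowerCentralSeries_succ_eq_bot]
        intro h hh
        rw [mem_center_iff]
        intro g
        exact Subtype.ext (mem_center_iff.1 (hN (hl1 h hh)) g)
      · intro h hh
        rw [pow_one]
        exact Subtype.ext (hNp _ (hl1 h hh))
    let φ : E →* E := MonoidHom.mk' (fun u => u ^ p) hpow
    let K : Subgroup P := φ.ker.map E.subtype
    have hKmem : ∀ g, g ∈ K ↔ g ∈ E ∧ g ^ p = 1 := by
      intro g
      constructor
      · rintro ⟨u, hu, rfl⟩
        refine ⟨u.2, ?_⟩
        have : u ^ p = 1 := hu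
        simpa [Subtype.ext_iff] using this
      · rintro ⟨h1, h2⟩
        exact ⟨⟨g, h1⟩, Subtype.ext h2, rfl⟩
    haveI hKn : K.Normal := by
      refine ⟨fun n hn g => ?_⟩
      rw [hKmem] at hn ⊢
      exact ⟨(inferInstance : E.Normal).conj_mem _ hn.1 g, by rw [conj_pow, hn.2]; simp⟩
    have hKN : ¬ K ≤ N := by
      intro hle
      have h1 : Nat.card φ.ker ≤ p := by
        rw [← hNc, Nat.card_congr (φ.ker.equivMapOfInjective E.subtype E.subtype_injective).toEquiv]
        exact Subgroup.card_le_of_le hle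
      have h2 : Nat.card φ.range ≤ p := by
        rw [← hNc, Nat.card_congr (φ.range.equivMapOfInjective E.subtype E.subtype_injective).toEquiv]
        apply Subgroup.card_le_of_le
        rintro _ ⟨_, ⟨u, rfl⟩, rfl⟩
        rw [← QuotientGroup.eq_one_iff]
        show ((u : P) ^ p : P) = (1 : P ⧸ N)
        rw [QuotientGroup.mk_pow]
        exact hVp _ u.2
      have h3 := φ.ker.card_mul_index
      rw [Subgroup.index_ker, hEc] at h3
      have := Nat.mul_le_mul h1 h2
      rw [h3] at this
      have : p ^ 3 = p * p * p := by ring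
      nlinarith [Nat.mul_pos hp.pos hp.pos]
    obtain ⟨wb, hwb, hwc, hwo⟩ := cx_meet hp hQ (K.map (QuotientGroup.mk' N)) (by
      rwa [Ne, Subgroup.map_eq_bot_iff, QuotientGroup.ker_mk'])
    obtain ⟨w, hw, rfl⟩ := hwb
    refine cx_lift hp N hN hNc w ((hKmem w).1 hw).2 ?_ hwc
    intro h
    have : (QuotientGroup.mk' N) w = 1 := (QuotientGroup.eq_one_iff _).2 h
    rw [this, orderOf_one] at hwo
    exact hp.one_lt.ne hwo

end CoexpPP
section CoexpMain
open Subgroup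
open scoped commutatorElement

theorem cx_map_lcs {P : Type*} [Group P] (N : Subgroup P) [N.Normal] (n : ℕ) :
    ((⊤ : Subgroup P).lowerCentralSeries n).map (QuotientGroup.mk' N) =
      (⊤ : Subgroup (P ⧸ N)).lowerCentralSeries n := by
  rw [Subgroup.map_lowerCentralSeries, Subgroup.map_top_of_surjective _ (QuotientGroup.mk'_surjective N)]

theorem cx_lcs_le {P : Type*} [Group P] (N : Subgroup P) [N.Normal] (n : ℕ)
    (h : (⊤ : Subgroup (P ⧸ N)).lowerCentralSeries n = ⊥) :
    (⊤ : Subgroup P).lowerCentralSeries n ≤ N := by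
  rw [← cx_map_lcs, Subgroup.map_eq_bot_iff, QuotientGroup.ker_mk'] at h
  exact h

theorem cx_lcs_mk {P : Type*} [Group P] (N : Subgroup P) [N.Normal] (n : ℕ) {a : P}
    (h : a ∈ (⊤ : Subgroup P).lowerCentralSeries n) :
    (a : P ⧸ N) ∈ (⊤ : Subgroup (P ⧸ N)).lowerCentralSeries n := by
  rw [← cx_map_lcs]
  exact mem_map_of_mem (QuotientGroup.mk' N) h

theorem cx_lcs_center {P : Type*} [Group P] {n : ℕ}
    (h : (⊤ : Subgroup P).lowerCentralSeries (n + 1) = ⊥) :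
    (⊤ : Subgroup P).lowerCentralSeries n ≤ center P := by
  intro a ha
  rw [mem_center_iff]
  intro g
  have : ⁅a, g⁆ ∈ (⊤ : Subgroup P).lowerCentralSeries (n + 1) :=
    commutator_mem_commutator ha (mem_top g)
  rw [h, mem_bot, commutatorElement_eq_one_iff_mul_comm] at this
  exact this.symm

theorem cx_socle {p : ℕ} (hp : p.Prime) {P : Type*} [Group P] [Finite P] (hP : IsPGroup p P)
    {x : P} {k : ℕ} (hx : orderOf x = p ^ (k + 1)) (H : Subgroup P) (hH : H ≠ ⊥)
    (hle : H ≤ zpowers x) : x ^ (p ^ k) ∈ H := by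
  obtain ⟨h, hh, h1⟩ : ∃ h, h ∈ H ∧ h ≠ 1 := by
    obtain ⟨a, ha⟩ := Subgroup.ne_bot_iff_exists_ne_one.1 hH
    exact ⟨a.1, a.2, fun h => ha (Subtype.ext h)⟩
  obtain ⟨j, hj, -⟩ := cx_order_p hp hP h1
  have hm : h ^ (p ^ j) ∈ H := pow_mem hh _
  obtain ⟨i, hi⟩ := mem_zpowers_iff.1 (hle hm)
  have h2 : x ^ (i * p) = 1 := by
    have h0 := pow_orderOf_eq_one (h ^ (p ^ j))
    rw [hj] at h0
    rw [zpow_mul, hi, zpow_natCast, h0]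
  rw [← orderOf_dvd_iff_zpow_eq_one, hx, pow_succ] at h2
  push_cast at h2
  have h3 : ((p : ℤ) ^ k) ∣ i :=
    Int.dvd_of_mul_dvd_mul_right (by exact_mod_cast hp.ne_zero) h2
  obtain ⟨c, rfl⟩ := h3
  have h4 : zpowers (h ^ (p ^ j)) ≤ zpowers (x ^ (p ^ k)) := by
    rw [zpowers_le, ← hi, zpow_mul]
    refine zpow_mem ?_ _
    have : x ^ ((p : ℤ) ^ k) = x ^ (p ^ k) := by
      rw [← zpow_natCast]; push_cast; rfl
    rw [this]
    exact mem_zpowers _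
  have ho : orderOf (x ^ (p ^ k)) = p := by
    rw [orderOf_pow_of_dvd (pow_ne_zero _ hp.ne_zero) (by rw [hx]; exact pow_dvd_pow _ (by omega)), hx,
      pow_succ, Nat.mul_div_cancel_left _ (pow_pos hp.pos k)]
  have h5 := Subgroup.eq_of_le_of_card_ge h4 (by rw [Nat.card_zpowers, Nat.card_zpowers, ho, hj])
  have h6 : zpowers (h ^ (p ^ j)) ≤ H := by rwa [zpowers_le]
  rw [h5, zpowers_le] at h6
  exact h6

def CxClaim (p : ℕ) (P : Type) [Group P] : Prop :=
  ∀ (e f : ℕ) (x : P), Nat.card P = p ^ (e + f) → orderOf x = p ^ e → (∀ g : P, g ^ (p ^ e) = 1) →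
    f + 1 < p → (⊤ : Subgroup P).lowerCentralSeries f ≤ zpowers x ∧
      (⊤ : Subgroup P).lowerCentralSeries (f + 1) = ⊥

theorem cx_quot_card {p m : ℕ} (hp : p.Prime) {P : Type} [Group P] [Finite P] (N : Subgroup P)
    [N.Normal] {j : ℕ} (hN : Nat.card N = p ^ j) (hc : Nat.card P = p ^ (m + j)) :
    Nat.card (P ⧸ N) = p ^ m := by
  have h := Subgroup.card_eq_card_quotient_mul_card_subgroup N
  rw [hN, hc, pow_add] at h
  exact (Nat.eq_of_mul_eq_mul_right (pow_pos hp.pos j) h).symm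

theorem cx_stepB {p : ℕ} (hp : p.Prime) (P : Type) [Group P] [Finite P]
    (IH : ∀ (Q : Type) [Group Q] [Finite Q], Nat.card Q < Nat.card P → CxClaim p Q)
    (e f : ℕ) (x : P) (hc : Nat.card P = p ^ (e + 1 + (f + 1))) (hx : orderOf x = p ^ (e + 1))
    (hexp : ∀ g : P, g ^ (p ^ (e + 1)) = 1) (hf : f + 1 + 1 < p)
    (hxc : x ^ (p ^ e) ∈ center P) :
    (⊤ : Subgroup P).lowerCentralSeries (f + 1) ≤ zpowers x := by
  haveI := Fact.mk hp
  obtain ⟨D, hD⟩ : ∃ D, D = zpowers (x ^ (p ^ e)) := ⟨_, rfl⟩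
  have ho : orderOf (x ^ (p ^ e)) = p := by
    rw [orderOf_pow_of_dvd (pow_ne_zero _ hp.ne_zero) (by rw [hx]; exact pow_dvd_pow _ (by omega)), hx,
      pow_succ, Nat.mul_div_cancel_left _ (pow_pos hp.pos e)]
  have hDc : Nat.card D = p ^ 1 := by rw [hD, Nat.card_zpowers, ho, pow_one]
  have hDcen : D ≤ center P := by rw [hD]; simpa using hxc
  haveI := cx_normal_of_central hDcen
  have hDx : D ≤ zpowers x := by rw [hD, zpowers_le]; exact pow_mem (mem_zpowers x) _
  have hQc : Nat.card (P ⧸ D) = p ^ (e + (f + 1)) :=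
    cx_quot_card hp D hDc (by rw [hc]; congr 1; ring)
  have hlt : Nat.card (P ⧸ D) < Nat.card P := by
    rw [hQc, hc]; exact Nat.pow_lt_pow_right hp.one_lt (by omega)
  by_cases hall : ∀ g : P ⧸ D, g ^ (p ^ e) = 1
  · have hox : orderOf (x : P ⧸ D) = p ^ e := by
      rcases e with _ | e
      · have := hall (x : P ⧸ D)
        simpa using this
      · apply orderOf_eq_prime_pow
        · rw [← QuotientGroup.mk_pow, QuotientGroup.eq_one_iff]
          intro hm
          have h1 : (x ^ (p ^ e)) ^ p = 1 := by
            have := pow_card_eq_one' (x := (⟨_, hm⟩ : D))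
            rw [hDc] at this
            simpa [Subtype.ext_iff] using this
          rw [← pow_mul, ← pow_succ] at h1
          have h2 := orderOf_dvd_of_pow_eq_one h1
          rw [hx] at h2
          have := (Nat.pow_dvd_pow_iff_le_right hp.one_lt).1 h2
          omega
        · exact hall _
    have h := (IH (P ⧸ D) hlt e (f + 1) x hQc hox hall hf).1
    intro a ha
    obtain ⟨i, hi⟩ := mem_zpowers_iff.1 (h (cx_lcs_mk D _ ha))
    have hn : (x ^ i)⁻¹ * a ∈ D := by
      rw [← QuotientGroup.eq]
      simpa using hi
    have := mul_mem (zpow_mem (mem_zpowers x) i) (hDx hn)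
    rw [mul_inv_cancel_left] at this
    exact this
  · push Not at hall
    obtain ⟨g, hg⟩ := hall
    have hexpQ : ∀ g : P ⧸ D, g ^ (p ^ (e + 1)) = 1 := by
      intro g
      obtain ⟨g, rfl⟩ := QuotientGroup.mk_surjective g
      rw [← QuotientGroup.mk_pow, hexp]; rfl
    have hog : orderOf g = p ^ (e + 1) := orderOf_eq_prime_pow hg (hexpQ g)
    have h := (IH (P ⧸ D) hlt (e + 1) f g (by rw [hQc]; congr 1; ring) hog hexpQ (by omega)).2
    exact (cx_lcs_le D _ h).trans hDx

theorem cx_stepA {p : ℕ} (hp : p.Prime) (P : Type) [Group P] [Finite P]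
    (IH : ∀ (Q : Type) [Group Q] [Finite Q], Nat.card Q < Nat.card P → CxClaim p Q)
    (e f : ℕ) (x : P) (hc : Nat.card P = p ^ (e + 1 + (f + 1))) (hx : orderOf x = p ^ (e + 1))
    (hexp : ∀ g : P, g ^ (p ^ (e + 1)) = 1) (hf : f + 1 + 1 < p)
    (L : Subgroup P) (hL : L ≤ center P) (hLc : Nat.card L = p ^ 1) (hLx : L ⊓ zpowers x = ⊥) :
    (⊤ : Subgroup P).lowerCentralSeries (f + 1) = ⊥ ∨ x ^ (p ^ e) ∈ center P := by
  haveI := Fact.mk hp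
  haveI := cx_normal_of_central hL
  have hQc : Nat.card (P ⧸ L) = p ^ (e + 1 + f) :=
    cx_quot_card hp L hLc (by rw [hc]; congr 1)
  have hlt : Nat.card (P ⧸ L) < Nat.card P := by
    rw [hQc, hc]; exact Nat.pow_lt_pow_right hp.one_lt (by omega)
  have hQp : IsPGroup p (P ⧸ L) := IsPGroup.of_card hQc
  have hexpQ : ∀ g : P ⧸ L, g ^ (p ^ (e + 1)) = 1 := by
    intro g
    obtain ⟨g, rfl⟩ := QuotientGroup.mk_surjective g
    rw [← QuotientGroup.mk_pow, hexp]; rfl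
  have hox : orderOf (x : P ⧸ L) = p ^ (e + 1) := by
    apply orderOf_eq_prime_pow _ (hexpQ _)
    rw [← QuotientGroup.mk_pow, QuotientGroup.eq_one_iff]
    intro hm
    have h1 : x ^ (p ^ e) ∈ L ⊓ zpowers x := ⟨hm, pow_mem (mem_zpowers x) _⟩
    rw [hLx, mem_bot] at h1
    have h2 := orderOf_dvd_of_pow_eq_one h1
    rw [hx] at h2
    have := (Nat.pow_dvd_pow_iff_le_right hp.one_lt).1 h2
    omega
  obtain ⟨hIx, hIb⟩ := IH (P ⧸ L) hlt (e + 1) f x hQc hox hexpQ (by omega)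
  by_cases hbot : (⊤ : Subgroup (P ⧸ L)).lowerCentralSeries f = ⊥
  · left
    rw [Subgroup.lowerCentralSeries_succ_eq_bot]
    exact (cx_lcs_le L _ hbot).trans hL
  right
  have hclP : (⊤ : Subgroup P).lowerCentralSeries (p - 1) = ⊥ := by
    rw [eq_bot_iff]
    refine (Subgroup.lowerCentralSeries_antitone _ (show f + 1 + 1 ≤ p - 1 by omega)).trans ?_
    rw [Subgroup.lowerCentralSeries_succ_eq_bot]
    exact (cx_lcs_le L _ hIb).trans hL
  have hclQ : (⊤ : Subgroup (P ⧸ L)).lowerCentralSeries (p - 1) = ⊥ := by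
    rw [eq_bot_iff, ← hIb]
    exact Subgroup.lowerCentralSeries_antitone _ (by omega)
  have hpowQ : ∀ g : P ⧸ L, g ^ (p ^ e) ∈ (⊤ : Subgroup (P ⧸ L)).lowerCentralSeries f := by
    intro g
    by_cases hg : g ^ (p ^ e) = 1
    · rw [hg]; exact one_mem _
    · have hog : orderOf g = p ^ (e + 1) := orderOf_eq_prime_pow hg (hexpQ g)
      exact cx_socle hp hQp hog _ hbot (IH (P ⧸ L) hlt (e + 1) f g hQc hog hexpQ (by omega)).1
  have hQ1 := cx_central_pow (k := e) hp hclQ 0 (fun a _ => cx_lcs_center hIb (hpowQ a))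
  have hP2 := cx_central_pow (k := e) hp hclP 1 (fun a ha => hL (by
    rw [← QuotientGroup.eq_one_iff, QuotientGroup.mk_pow]
    exact hQ1 _ (cx_lcs_mk L _ ha)))
  rw [mem_center_iff]
  intro y
  have h1 := cx_comm_pow (k := e) hp hclP 0 hP2 x y (mem_top _)
  have h2 := cx_comm_pow (k := e) hp hclP 0 hP2 y x (mem_top _)
  have h3 : ⁅y ^ (p ^ e), x⁆ = 1 := by
    rw [commutatorElement_eq_one_iff_mul_comm]
    obtain ⟨i, hi⟩ := mem_zpowers_iff.1 (hIx (hpowQ (y : P ⧸ L)))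
    have hn : (x ^ i)⁻¹ * y ^ (p ^ e) ∈ L := by
      rw [← QuotientGroup.eq]
      simpa using hi
    have h4 : Commute x ((x ^ i)⁻¹ * y ^ (p ^ e)) := mem_center_iff.1 (hL hn) x
    have h5 := ((Commute.refl x).zpow_right i).mul_right h4
    rw [mul_inv_cancel_left] at h5
    exact h5.symm.eq
  rw [h3, ← commutatorElement_inv, inv_pow, inv_eq_one, h1,
    commutatorElement_eq_one_iff_mul_comm] at h2
  exact h2.symm

theorem cx_exists_max {p : ℕ} (hp : p.Prime) {P : Type} [Group P] [Finite P] (hP : IsPGroup p P) :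
    ∃ (e : ℕ) (x : P), orderOf x = p ^ e ∧ ∀ g : P, g ^ (p ^ e) = 1 := by
  haveI := Fact.mk hp
  obtain ⟨x, hx⟩ := Finite.exists_max (fun g : P => orderOf g)
  obtain ⟨e, he⟩ := IsPGroup.iff_orderOf.1 hP x
  refine ⟨e, x, he, fun g => ?_⟩
  obtain ⟨k, hk⟩ := IsPGroup.iff_orderOf.1 hP g
  have := hx g
  simp only [hk, he] at this
  have := (Nat.pow_le_pow_iff_right hp.one_lt).1 this
  rw [← orderOf_dvd_iff_pow_eq_one, hk]
  exact pow_dvd_pow _ this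

theorem cx_main {p : ℕ} (hp : p.Prime) : ∀ (m : ℕ) (P : Type) [Group P] [Finite P],
    Nat.card P = m → CxClaim p P := by
  haveI := Fact.mk hp
  intro m
  induction m using Nat.strong_induction_on with
  | _ m ih =>
  intro P _ _ hm
  have IH : ∀ (Q : Type) [Group Q] [Finite Q], Nat.card Q < Nat.card P → CxClaim p Q :=
    fun Q _ _ h => ih _ (hm ▸ h) Q rfl
  intro e f x hc hx hexp hf
  have hP : IsPGroup p P := IsPGroup.of_card hc
  rcases f with _ | f
  · have ht : zpowers x = ⊤ := by
      apply Subgroup.eq_top_of_card_eq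
      rw [Nat.card_zpowers, hx, hc, add_zero]
    refine ⟨by rw [ht]; exact le_top, ?_⟩
    rw [Subgroup.lowerCentralSeries_succ_eq_bot]
    intro a _
    rw [mem_center_iff]
    intro g
    obtain ⟨i, rfl⟩ := mem_zpowers_iff.1 (ht ▸ mem_top a : a ∈ zpowers x)
    obtain ⟨j, rfl⟩ := mem_zpowers_iff.1 (ht ▸ mem_top g : g ∈ zpowers x)
    exact zpow_mul_comm x j i
  rcases e with _ | e
  · exfalso
    haveI : Subsingleton P := ⟨fun a b => by
      have h1 := hexp a
      have h2 := hexp b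
      simp only [pow_zero, pow_one] at h1 h2
      rw [h1, h2]⟩
    rw [Nat.card_of_subsingleton (1 : P)] at hc
    have := Nat.one_lt_pow (n := 0 + (f + 1)) (by omega) hp.one_lt
    omega
  have hncyc : ¬ IsCyclic P := by
    rintro ⟨g, hg⟩
    have h1 := orderOf_eq_card_of_forall_mem_zpowers hg
    have h2 := orderOf_dvd_of_pow_eq_one (hexp g)
    rw [h1, hc] at h2
    have := (Nat.pow_dvd_pow_iff_le_right hp.one_lt).1 h2
    omega
  have hnt : (⊤ : Subgroup P) ≠ ⊥ := by
    intro h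
    apply hncyc
    haveI : Subsingleton P := by rwa [← Subgroup.subsingleton_iff, ← subsingleton_iff_bot_eq_top, eq_comm]
    infer_instance
  have hfirst : (⊤ : Subgroup P).lowerCentralSeries (f + 1) ≤ zpowers x := by
    obtain ⟨b, -, hbc, hbo⟩ := cx_meet hp hP ⊤ hnt
    have hL : zpowers b ≤ center P := by simpa using hbc
    by_cases hLx : zpowers b ⊓ zpowers x = ⊥
    · rcases cx_stepA hp P IH e f x hc hx hexp hf (zpowers b) hL
        (by rw [Nat.card_zpowers, hbo, pow_one]) hLx with h | h
      · rw [h]; exact bot_le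
      · exact cx_stepB hp P IH e f x hc hx hexp hf h
    · exact cx_stepB hp P IH e f x hc hx hexp hf
        (hL (cx_socle hp hP hx _ hLx inf_le_right).1)
  refine ⟨hfirst, ?_⟩
  obtain ⟨U, hU, hUc, hUp⟩ := cx_pp hp (by omega) _ P rfl hP hncyc
  obtain ⟨e', y, hy, hye⟩ := cx_exists_max hp (hP.to_quotient U)
  have hQc : Nat.card (P ⧸ U) = p ^ (e + f) :=
    cx_quot_card hp U hUc (by rw [hc]; congr 1; ring)
  have hlt : Nat.card (P ⧸ U) < Nat.card P := by
    rw [hQc, hc]; exact Nat.pow_lt_pow_right hp.one_lt (by omega)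
  have he' : e ≤ e' := by
    have h1 := hye (x : P ⧸ U)
    rw [← QuotientGroup.mk_pow, QuotientGroup.eq_one_iff] at h1
    have h2 := hUp _ h1
    rw [← pow_mul, ← pow_succ] at h2
    have h3 := orderOf_dvd_of_pow_eq_one h2
    rw [hx] at h3
    have := (Nat.pow_dvd_pow_iff_le_right hp.one_lt).1 h3
    omega
  have he2 : e' ≤ e + f := by
    have h1 := orderOf_dvd_natCard y
    rw [hy, hQc] at h1
    exact (Nat.pow_dvd_pow_iff_le_right hp.one_lt).1 h1
  have h1 := (IH (P ⧸ U) hlt e' (e + f - e') y (by rw [hQc]; congr 1; omega) hy hye (by omega)).2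
  have h2 : (⊤ : Subgroup P).lowerCentralSeries (f + 1) ≤ U := by
    apply cx_lcs_le
    rw [eq_bot_iff, ← h1]
    exact Subgroup.lowerCentralSeries_antitone _ (by omega)
  rw [Subgroup.lowerCentralSeries_succ_eq_bot]
  obtain ⟨T, hT⟩ : ∃ T, T = (⊤ : Subgroup P).lowerCentralSeries (f + 1) := ⟨_, rfl⟩
  haveI : T.Normal := by rw [hT]; infer_instance
  rw [← hT] at hfirst h2 ⊢
  apply cx_normal_p hp hP
  haveI : IsCyclic T := Subgroup.isCyclic_of_le hfirst
  obtain ⟨t, ht⟩ := IsCyclic.exists_generator (α := T)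
  rw [← orderOf_eq_card_of_forall_mem_zpowers ht]
  apply orderOf_dvd_of_pow_eq_one
  exact Subtype.ext (hUp _ (h2 t.2))

end CoexpMain

/-- Let `P` be a finite `p`-group of order `p ^ n` and exponent `p ^ e`,
so that its coexponent is `f(P) = n - e`.  If `p > f(P) + 1` then the nilpotency class of `P`
is at most `f(P) + 1`; equivalently, the `(f(P)+1)`-st term of the lower central series
(with `lowerCentralSeries P 0 = ⊤`) is trivial. -/
theorem coexponent_class_bound (p n e : ℕ) (hp : p.Prime) (P : Type) [Group P] [Finite P]
    (hcard : Nat.card P = p ^ n) (hexp : Monoid.exponent P = p ^ e)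
    (hpf : p > (n - e) + 1) :
    Subgroup.lowerCentralSeries (⊤ : Subgroup P) ((n - e) + 1) = ⊥ := by
  have hP : IsPGroup p P := IsPGroup.of_card hcard
  obtain ⟨k, x, hx, hk⟩ := cx_exists_max hp hP
  have h1 : p ^ e ∣ p ^ k := by
    rw [← hexp]; exact Monoid.exponent_dvd_of_forall_pow_eq_one hk
  have h2 : p ^ k ∣ p ^ e := by
    rw [← hexp, ← hx]; exact Monoid.order_dvd_exponent x
  have h3 : k = e := Nat.pow_right_injective hp.two_le (Nat.dvd_antisymm h2 h1)
  subst h3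
  have h4 : k ≤ n := by
    have h := orderOf_dvd_natCard x
    rw [hx, hcard] at h
    exact (Nat.pow_dvd_pow_iff_le_right hp.one_lt).1 h
  exact (cx_main hp _ P rfl k (n - k) x (by rw [hcard]; congr 1; omega) hx hk hpf).2
end

section
/- Fix an integer f ≥ 3. For every prime p with p > f + 1, the number Ψ_{n,f}^p of isomorphism classes of groups of order p^n with coexponent f is independent of n for n ≥ 3f; that is, for all n, n' ≥ 3f, Ψ_{n,f}^p = Ψ_{n',f}^p. -/
/-- The multiplication extracted from a group structure. -/
def mulOfGroup (G : Type) (s : Group G) : Mul G := by letI := s; infer_instance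

/-- The number of isomorphism classes of groups of order `N` whose group structure
satisfies the predicate `Q`. -/
noncomputable def groupClassCount (N : ℕ) (Q : Group (Fin N) → Prop) : ℕ :=
  Nat.card (Quot fun s t : {s : Group (Fin N) // Q s} =>
    Nonempty (@MulEquiv (Fin N) (Fin N) (mulOfGroup _ s.1) (mulOfGroup _ t.1)))

/-- `Ψ_{n,f}^p`: the number of isomorphism classes of groups of order `p ^ n`
with coexponent `f`, i.e. with exponent `p ^ e` where `n - e = f`. -/
noncomputable def PsiCoexp (p n f : ℕ) : ℕ :=
  groupClassCount (p ^ n) fun s =>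
    letI := s
    ∃ e : ℕ, Monoid.exponent (Fin (p ^ n)) = p ^ e ∧ n - e = f

theorem arith1 (p s : ℕ) (hp : p.Prime) (h2 : p ≠ 2) (hs : 1 ≤ s) (l : ℤ)
   (h : (p:ℤ)^(s+1) ∣ l^p - 1) : (p:ℤ)^s ∣ l - 1 := by
  have := Fact.mk hp
  have h1 : (p:ℤ) ∣ l - 1 := by
    have h3 : (p:ℤ) ∣ l^p - 1 := (dvd_pow_self _ (by omega)).trans h
    rw [← ZMod.intCast_zmod_eq_zero_iff_dvd] at h3 ⊢
    push_cast at h3 ⊢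
    rwa [ZMod.pow_card] at h3
  have hl : ¬ (p:ℤ) ∣ l := by
    intro h3
    have := (Int.dvd_iff_dvd_of_dvd_sub h1).1 h3
    exact hp.one_lt.ne' (by exact_mod_cast Int.eq_one_of_dvd_one (by positivity) this)
  have := Int.emultiplicity_pow_sub_pow hp (hp.odd_of_ne_two h2) (x := l) (y := 1) h1 hl p
  rw [one_pow] at this
  have h4 := le_emultiplicity_of_pow_dvd h
  have h5 : emultiplicity p p = 1 := by
    have := (Nat.finiteMultiplicity_iff.2 ⟨hp.one_lt.ne', hp.pos⟩ : FiniteMultiplicity p p).emultiplicity_self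
    exact this
  rw [this, h5] at h4
  apply pow_dvd_of_le_emultiplicity
  push_cast at h4
  exact (ENat.add_le_add_iff_right (by simp)).1 h4

theorem arith2 (p s : ℕ) (hp : p.Prime) (h2 : p ≠ 2) (hs : 1 ≤ s) (l : ℤ)
   (h : (p:ℤ)^s ∣ l - 1) : (p:ℤ)^(s+1) ∣ (∑ i ∈ Finset.range p, l^i) - p := by
  obtain ⟨c, hc⟩ := h
  have hl : l = 1 + p^s*c := by linarith
  have key : ∀ k : ℕ, (p:ℤ)^(s+1) ∣ l^k - (1 + k * (p^s*c)) := by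
    intro k
    induction k with
    | zero => simp
    | succ k ih =>
      have : l^(k+1) - (1 + (k+1:ℕ) * (p^s*c)) = (l^k - (1 + k * (p^s*c))) * l + p^(s+1) * (p^(s-1) * (k*c*c)) := by
        have : (p:ℤ)^(s+1) * (p^(s-1) * (k*c*c)) = p^s*p^s*(k*c*c) := by
          rw [← mul_assoc, ← pow_add, ← pow_add]; congr 2; omega
        rw [this, hl]; push_cast; ring
      rw [this]
      exact dvd_add (ih.mul_right _) (dvd_mul_right _ _)
  have h5 : (∑ i ∈ Finset.range p, l^i) - p = ∑ i ∈ Finset.range p, (l^i - (1 + i * (p^s*c))) + (p^s*c) * ∑ i ∈ Finset.range p, (i:ℤ) := by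
    rw [Finset.sum_sub_distrib, Finset.sum_add_distrib, Finset.mul_sum]
    simp [mul_comm]
    ring
  rw [h5]
  refine dvd_add (Finset.dvd_sum fun i _ => key i) ?_
  have h6 : (p:ℤ) ∣ ∑ i ∈ Finset.range p, (i:ℤ) := by
    have := Finset.sum_range_id_mul_two p
    have h7 : p ∣ (∑ i ∈ Finset.range p, i) * 2 := ⟨_, this⟩
    have := (Nat.Coprime.dvd_of_dvd_mul_right ((Nat.coprime_primes hp Nat.prime_two).2 h2) h7)
    rw [← Nat.cast_sum]
    exact_mod_cast this
  rw [pow_succ, mul_assoc]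
  exact mul_dvd_mul_left _ (h6.mul_left _)

theorem powHom (p : ℕ) (hp : p.Prime) (h2 : p ≠ 2) (f : ℕ) : ∀ (e : ℕ) (G : Type) [Group G] (x : G),
    f < e → Nat.card G = p^(e+f) → orderOf x = p^e → (∀ g : G, g^(p^e) = 1) →
    (∀ a b : G, (a*b)^p^f = a^p^f*b^p^f) ∧ (∀ g : G, ∃ j : ℤ, g^p^f = (x^p^f)^j) ∧
      (∀ g : G, x^p^f * g = g * x^p^f) := by
  have := Fact.mk hp
  induction f with
  | zero =>
    intro e G _ x _ hc ho hx
    have : Finite G := Nat.finite_of_card_ne_zero (by rw [hc]; exact pow_ne_zero _ hp.ne_zero)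
    have htop : ∀ g : G, ∃ j : ℤ, x^j = g := by
      have : Subgroup.zpowers x = ⊤ := by
        apply Subgroup.eq_top_of_card_eq
        rw [Nat.card_zpowers, ho, hc, add_zero]
      intro g
      have hg : g ∈ Subgroup.zpowers x := by rw [this]; trivial
      exact hg
    refine ⟨by simp, fun g => ?_, fun g => ?_⟩
    · obtain ⟨j, hj⟩ := htop g
      exact ⟨j, by simp [hj]⟩
    · obtain ⟨j, hj⟩ := htop g
      rw [← hj, pow_zero, pow_one, mul_self_zpow, mul_zpow_self]
  | succ f ih =>
    intro e G _ x hfe hc ho hx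
    have : Finite G := Nat.finite_of_card_ne_zero (by rw [hc]; exact pow_ne_zero _ hp.ne_zero)
    obtain ⟨M, hMc, hxM⟩ := Sylow.exists_subgroup_card_pow_prime_le (G := G) p (m := e + f) (n := e)
      (by rw [hc]; exact pow_dvd_pow _ (by omega)) (Subgroup.zpowers x)
      (by rw [Nat.card_zpowers, ho]) (by omega)
    have hxM : x ∈ M := hxM (Subgroup.mem_zpowers x)
    have hidx : M.index = p := by
      have := M.card_mul_index
      rw [hMc, hc, ← add_assoc, pow_succ] at this
      exact Nat.eq_of_mul_eq_mul_left (pow_pos hp.pos _) this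
    have hMn : M.Normal := by
      apply Subgroup.normal_of_index_eq_minFac_card
      rw [hidx, hc, hp.pow_minFac (by omega)]
    obtain ⟨I1, I2, I3⟩ := ih e M ⟨x, hxM⟩ (by omega) hMc (by rw [← ho]; simp [← Subgroup.orderOf_coe])
      (fun g => by ext; simpa using hx g)
    set q := p^f with hq
    have H1 : ∀ a ∈ M, ∀ b ∈ M, (a*b)^q = a^q*b^q := fun a ha b hb => by
      simpa using congrArg Subtype.val (I1 ⟨a, ha⟩ ⟨b, hb⟩)
    have H2 : ∀ a ∈ M, ∃ j : ℤ, a^q = (x^q)^j := fun a ha => by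
      obtain ⟨j, hj⟩ := I2 ⟨a, ha⟩
      exact ⟨j, by simpa using congrArg Subtype.val hj⟩
    have H3 : ∀ a ∈ M, x^q*a = a*x^q := fun a ha => by
      simpa using congrArg Subtype.val (I3 ⟨a, ha⟩)
    clear I1 I2 I3 ih
    obtain ⟨s, hs⟩ : ∃ s, e = f + 1 + s := ⟨e - (f+1), by omega⟩
    have hs1 : 1 ≤ s := by omega
    set z := x^q with hz
    have hzo : orderOf z = p^(s+1) := by
      rw [hz, orderOf_pow_of_dvd (pow_ne_zero _ hp.ne_zero) (by rw [ho]; exact pow_dvd_pow _ (by omega)), ho,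
        Nat.pow_div (by omega) hp.pos]
      congr 1; omega
    have hzo' : ∀ i : ℤ, z^i = 1 ↔ (p:ℤ)^(s+1) ∣ i := by
      intro i
      rw [← orderOf_dvd_iff_zpow_eq_one, hzo]; push_cast; rfl
    have hgp : ∀ g : G, g^p ∈ M := fun g => by
      have := M.pow_index_mem g
      rwa [hidx] at this
    have hqp : p^(f+1) = q*p := pow_succ _ _
    have hqp' : p^(f+1) = p*q := by rw [hqp, mul_comm]
    -- the conjugation action on z
    have hlam : ∀ g : G, ∃ l : ℤ, (p:ℤ)^s ∣ l - 1 ∧ ∀ i : ℤ, g*z^i*g⁻¹ = z^(l*i) := by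
      intro g
      obtain ⟨l, hl⟩ := H2 (g*x*g⁻¹) (hMn.conj_mem _ hxM g)
      rw [conj_pow, ← hz] at hl
      have hli : ∀ i : ℤ, g*z^i*g⁻¹ = z^(l*i) := fun i => by
        rw [← conj_zpow, hl, zpow_mul]
      refine ⟨l, arith1 p s hp h2 hs1 l ?_, hli⟩
      have hk : ∀ k : ℕ, g^k*z*(g^k)⁻¹ = z^(l^k) := by
        intro k
        induction k with
        | zero => simp
        | succ k ih =>
          rw [pow_succ', pow_succ', ← hli, ← ih]; group
      rw [← hzo', zpow_sub, ← hk p, zpow_one, ← H3 _ (hgp g)]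
      group
    have hcen : ∀ g : G, x^(p^(f+1)) * g = g * x^(p^(f+1)) := by
      intro g
      obtain ⟨l, ⟨c, hc⟩, hl⟩ := hlam g
      have h3 := hl p
      have h4 : z^(l*p) = z^(p:ℤ) := by
        rw [← mul_inv_eq_one, ← zpow_neg, ← zpow_add, hzo']
        exact ⟨c, by rw [← sub_eq_add_neg, ← sub_one_mul, hc]; ring⟩
      rw [h4, zpow_natCast, hz, ← pow_mul, ← hqp] at h3
      rw [mul_inv_eq_iff_eq_mul] at h3
      exact h3.symm
    have himg : ∀ g : G, ∃ j : ℤ, g^(p^(f+1)) = (x^(p^(f+1)))^j := by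
      intro g
      obtain ⟨j, hj⟩ := H2 _ (hgp g)
      have h5 : (p:ℤ) ∣ j := by
        have h6 : z^(j*(p^s:ℕ)) = 1 := by
          rw [zpow_mul, ← hj, zpow_natCast, ← pow_mul, ← pow_mul]
          rw [← hx g, hs, hq]; congr 1; ring
        rw [hzo', pow_succ'] at h6
        push_cast at h6
        exact Int.dvd_of_mul_dvd_mul_right (pow_ne_zero _ (by exact_mod_cast hp.ne_zero)) h6
      obtain ⟨i, rfl⟩ := h5
      refine ⟨i, ?_⟩
      rw [hqp', pow_mul, hj, zpow_mul, zpow_natCast, mul_comm p q, pow_mul]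
    -- main computation
    have main : ∀ g : G, ∀ m ∈ M, (m*g)^(p^(f+1)) = m^(p^(f+1)) * g^(p^(f+1)) := by
      intro g m hm
      obtain ⟨l, hl1, hl⟩ := hlam g
      obtain ⟨j, hj⟩ := H2 m hm
      have hk : ∀ k : ℕ, ∃ w ∈ M, (m*g)^k = w*g^k ∧ w^q = z^(j * ∑ i ∈ Finset.range k, l^i) := by
        intro k
        induction k with
        | zero => exact ⟨1, M.one_mem, by simp⟩
        | succ k ih =>
          obtain ⟨w, hw, h3, h4⟩ := ih
          refine ⟨m*(g*w*g⁻¹), M.mul_mem hm (hMn.conj_mem _ hw g), ?_, ?_⟩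
          · rw [pow_succ', h3, pow_succ' g]; group
          · rw [H1 _ hm _ (hMn.conj_mem _ hw g), conj_pow, h4, hj, hl, ← zpow_add, geom_sum_succ]
            congr 1; ring
      obtain ⟨w, hw, h3, h4⟩ := hk p
      rw [hqp', pow_mul, h3, H1 _ hw _ (hgp g), h4, pow_mul, pow_mul]
      congr 1
      rw [← pow_mul, mul_comm p q, pow_mul, hj, ← zpow_natCast, ← zpow_mul, ← mul_inv_eq_one, ← zpow_neg,
        ← zpow_add, hzo', ← sub_eq_add_neg, ← mul_sub]
      exact (arith2 p s hp h2 hs1 l hl1).mul_left _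
    refine ⟨fun a b => ?_, himg, hcen⟩
    have hcm : ∀ g h : G, g^(p^(f+1)) * h = h * g^(p^(f+1)) := by
      intro g h
      obtain ⟨j, hj⟩ := himg g
      rw [hj]
      exact (Commute.zpow_left (hcen h) j)
    by_cases ha : a ∈ M
    · exact main b a ha
    · -- b = m * a^i
      obtain ⟨i, hi⟩ : ∃ i : ℕ, b * (a^i)⁻¹ ∈ M := by
        have hcq : Nat.card (G ⧸ M) = p := hidx
        have h7 : (QuotientGroup.mk b : G ⧸ M) ∈ Submonoid.powers (QuotientGroup.mk a : G ⧸ M) :=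
          mem_powers_of_prime_card hcq (by rwa [Ne, QuotientGroup.eq_one_iff])
        obtain ⟨i, hi⟩ := h7
        refine ⟨i, ?_⟩
        rw [← QuotientGroup.eq_one_iff, QuotientGroup.mk_mul, QuotientGroup.mk_inv, QuotientGroup.mk_pow]
        simp only at hi
        rw [hi, mul_inv_cancel]
      have e1 : a*b = (a*(b*(a^i)⁻¹)*a⁻¹) * a^(i+1) := by rw [pow_succ']; group
      have e2 : b = (b*(a^i)⁻¹)*a^i := by group
      have hb : b^(p^(f+1)) = (b*(a^i)⁻¹)^(p^(f+1)) * (a^i)^(p^(f+1)) := by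
        conv_lhs => rw [e2]
        exact main _ _ hi
      rw [e1, main _ _ (hMn.conj_mem _ hi a), hb, conj_pow, ← hcm _ a, mul_inv_cancel_right,
        hcm a, mul_assoc, pow_succ a i, (Commute.pow_self a i).mul_pow]

/-- A group `G` is realized at level `N` by the data `(K, α, t)`. -/
structure Rlz (q N : ℕ) {K G : Type} [Group K] [Group G] (α : MulAut K) (t : K) (x : G) (ι : K →* G) :
    Prop where
  inj : Function.Injective ι
  tor : ∀ k, (ι k)^q = 1
  rng : ∀ g : G, g^q = 1 → ∃ k, ι k = g
  conj : ∀ k, ι (α k) = x * ι k * x⁻¹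
  xN : x^N = ι t
  ord : orderOf x = q*N
  gen : ∀ g : G, ∃ (k : K) (j : ℤ), g = ι k * x^j
  cen : ∀ g : G, x^q * g = g * x^q
  pw : ∀ a b : G, (a*b)^q = a^q*b^q

namespace Rlz

open SemidirectProduct

variable {q N : ℕ} {K G : Type} [Group K] [Group G] {α : MulAut K} {t : K} {x : G} {ι : K →* G}

theorem conjz (h : Rlz q N α t x ι) (j : ℤ) (k : K) : ι ((α^j) k) = x^j * ι k * (x^j)⁻¹ := by
  have hn : ∀ (n : ℕ) k, ι ((α^n) k) = x^n * ι k * (x^n)⁻¹ := by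
    intro n
    induction n with
    | zero => simp
    | succ n ih =>
      intro k
      rw [pow_succ', MulAut.mul_apply, h.conj, ih, pow_succ']; group
  obtain ⟨n, rfl | rfl⟩ := j.eq_nat_or_neg
  · simpa using hn n k
  · have := hn n ((α^(-(n:ℤ))) k)
    rw [← MulAut.mul_apply, ← zpow_natCast, ← zpow_add] at this
    simp only [add_neg_cancel, zpow_zero, MulAut.one_apply] at this
    rw [this]; simp [mul_assoc]

theorem zmem (h : Rlz q N α t x ι) (hq : 0 < q) (k : K) (j : ℤ) :
    ι k * x^j = 1 ↔ ∃ c : ℤ, j = N*c ∧ k = t^(-c) := by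
  constructor
  · intro h1
    have h2 : ι k = x^(-j) := by rw [zpow_neg]; exact eq_inv_of_mul_eq_one_left h1
    have h3 : x^(-j*q) = 1 := by rw [zpow_mul, ← h2, zpow_natCast, h.tor]
    rw [← orderOf_dvd_iff_zpow_eq_one, h.ord] at h3
    push_cast at h3
    rw [neg_mul, dvd_neg, mul_comm] at h3
    obtain ⟨c, rfl⟩ := Int.dvd_of_mul_dvd_mul_right (by exact_mod_cast hq.ne') h3
    refine ⟨c, rfl, h.inj ?_⟩
    rw [h2, map_zpow, ← h.xN, ← zpow_natCast, ← zpow_mul]; congr 1; ring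
  · rintro ⟨c, rfl, rfl⟩
    rw [zpow_mul, zpow_natCast, h.xN, map_zpow, ← zpow_add]; simp

theorem pw2 (h : Rlz q N α t x ι) (k : K) (j : ℤ) : (ι k * x^j)^q = x^(j*q) := by
  rw [h.pw, h.tor, one_mul, zpow_mul, zpow_natCast]

theorem ordt (h : Rlz q N α t x ι) (hN : 0 < N) : orderOf t = q := by
  rw [← orderOf_injective ι h.inj, ← h.xN, orderOf_pow_of_dvd hN.ne' (by rw [h.ord]; exact dvd_mul_left _ _),
    h.ord, Nat.mul_div_cancel _ hN]

/-- the canonical map from the semidirect product -/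
theorem exists_hom (h : Rlz q N α t x ι) :
    ∃ F : K ⋊[zpowersHom (MulAut K) α] (Multiplicative ℤ) →* G,
      ∀ γ, F γ = ι γ.left * x^(Multiplicative.toAdd γ.right) := by
  refine ⟨SemidirectProduct.lift ι (zpowersHom G x) ?_, ?_⟩
  · intro g
    ext k
    have := h.conjz (Multiplicative.toAdd g) k
    rw [← MulAut.conj_apply, map_zpow] at this
    simpa using this
  · intro γ
    conv_lhs => rw [← inl_left_mul_inr_right γ]
    rw [map_mul, lift_inl, lift_inr]
    simp

theorem equiv_of {H : Type} [Group H] {w : H} {κ : K →* H} (h : Rlz q N α t x ι) (h' : Rlz q N α t w κ)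
    (hq : 0 < q) : Nonempty (G ≃* H) := by
  obtain ⟨F, hF⟩ := h.exists_hom
  obtain ⟨F', hF'⟩ := h'.exists_hom
  have hk : F.ker = F'.ker := by
    ext γ
    rw [MonoidHom.mem_ker, MonoidHom.mem_ker, hF, hF', h.zmem hq, h'.zmem hq]
  have s1 : Function.Surjective F := fun g => by
    obtain ⟨k, j, rfl⟩ := h.gen g
    exact ⟨⟨k, Multiplicative.ofAdd j⟩, by rw [hF]; rfl⟩
  have s2 : Function.Surjective F' := fun g => by
    obtain ⟨k, j, rfl⟩ := h'.gen g
    exact ⟨⟨k, Multiplicative.ofAdd j⟩, by rw [hF']; rfl⟩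
  exact ⟨(QuotientGroup.quotientKerEquivOfSurjective F s1).symm.trans
    ((QuotientGroup.quotientMulEquivOfEq hk).trans (QuotientGroup.quotientKerEquivOfSurjective F' s2))⟩

theorem card_eq (h : Rlz q N α t x ι) (hq : 0 < q) (hN : 0 < N) : Nat.card G = Nat.card K * N := by
  have : Function.Bijective (fun a : K × Fin N => ι a.1 * x^((a.2:ℕ):ℤ)) := by
    constructor
    · rintro ⟨k, i⟩ ⟨l, j⟩ hij
      simp only at hij
      have h1 : ι (l⁻¹*k) * x^((i:ℤ)-(j:ℤ)) = 1 := by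
        rw [map_mul, map_inv, zpow_sub, ← mul_assoc, mul_assoc _ (ι k), hij]; group
      obtain ⟨c, hc, hk⟩ := (h.zmem hq _ _).1 h1
      have hij2 : (i:ℤ) = j := by
        have h3 : (i:ℤ) ≡ j [ZMOD N] := (Int.modEq_iff_dvd.2 ⟨c, hc⟩).symm
        have h4 : (i:ℕ) ≡ j [MOD N] := by exact_mod_cast h3
        have := Nat.ModEq.eq_of_lt_of_lt h4 i.2 j.2
        exact_mod_cast this
      have hij3 : i = j := Fin.ext (by exact_mod_cast hij2)
      subst hij3
      simp only [mul_left_inj] at hij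
      rw [h.inj hij]
    · intro g
      obtain ⟨k, j, rfl⟩ := h.gen g
      have hN' : (N:ℤ) ≠ 0 := by exact_mod_cast hN.ne'
      have hm : 0 ≤ j % N := Int.emod_nonneg _ hN'
      have hm2 : j % N < N := Int.emod_lt_of_pos _ (by exact_mod_cast hN)
      refine ⟨⟨k * t^(j/N), ⟨(j % N).toNat, by omega⟩⟩, ?_⟩
      simp only
      rw [Int.toNat_of_nonneg hm, map_mul, map_zpow, ← h.xN, ← zpow_natCast, ← zpow_mul, mul_assoc,
        ← zpow_add, Int.mul_ediv_add_emod]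
  rw [← Nat.card_eq_of_bijective _ this, Nat.card_prod, Nat.card_fin]

theorem pow_exp (h : Rlz q N α t x ι) (g : G) : g^(q*N) = 1 := by
  obtain ⟨k, j, rfl⟩ := h.gen g
  rw [pow_mul, h.pw2, zpow_mul, zpow_natCast, ← pow_mul, ← zpow_natCast, ← zpow_mul, mul_comm, zpow_mul,
    zpow_natCast, ← h.ord, pow_orderOf_eq_one, one_zpow]

theorem construct (h : Rlz q N α t x ι) (hq : 0 < q) (hN : 0 < N) (hqN : q ∣ N) (N' : ℕ) (hN' : 0 < N')
    (hqN' : q ∣ N') : ∃ (G' : Type) (_ : Group G') (x' : G') (ι' : K →* G'), Rlz q N' α t x' ι' := by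
  obtain ⟨F, hF⟩ := h.exists_hom
  have hl : ∀ (k : K) (j : ℤ), (inl k * inr (Multiplicative.ofAdd j) :
      K ⋊[zpowersHom (MulAut K) α] (Multiplicative ℤ)).left = k := by intro k j; simp
  have hr : ∀ (k : K) (j : ℤ), (inl k * inr (Multiplicative.ofAdd j) :
      K ⋊[zpowersHom (MulAut K) α] (Multiplicative ℤ)).right = Multiplicative.ofAdd j := by intro k j; simp
  let Γ := K ⋊[zpowersHom (MulAut K) α] (Multiplicative ℤ)
  let X : Γ := inr (Multiplicative.ofAdd 1)
  let J : K →* Γ := inl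
  have hX : ∀ j : ℤ, X^j = inr (Multiplicative.ofAdd j) := by
    intro j
    change (inr (Multiplicative.ofAdd 1) : Γ)^j = _
    rw [← map_zpow, ← ofAdd_zsmul]; simp
  have hdec : ∀ γ : Γ, γ = J γ.left * X^(Multiplicative.toAdd γ.right) := by
    intro γ
    rw [hX]; exact (inl_left_mul_inr_right γ).symm
  have hJX : ∀ (k : K) (j : ℤ) (l : K) (i : ℤ), J k * X^j = J l * X^i → k = l ∧ j = i := by
    intro k j l i hh
    rw [hX, hX] at hh
    have h1 := congrArg SemidirectProduct.left hh
    have h2 := congrArg SemidirectProduct.right hh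
    exact ⟨(hl k j).symm.trans (h1.trans (hl l i)), (hr k j).symm.trans (h2.trans (hr l i))⟩
  have hFX : ∀ (k : K) (j : ℤ), F (J k * X^j) = ι k * x^j := by
    intro k j
    rw [hF, hX]
    erw [hl, hr]
    rfl
  let d : Γ →* Multiplicative ℤ := rightHom
  have hdX : ∀ γ : Γ, γ.right = d γ := fun _ => rfl
  have hd : ∀ k j, d (J k * X^j) = Multiplicative.ofAdd j := by
    intro k j
    rw [hX]; exact hr k j
  have hpw : ∀ (k : K) (j : ℤ), (J k * X^j)^q = X^(j*q) := by
    intro k j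
    have h1 := hdec ((J k * X^j)^q)
    have h2 : Multiplicative.toAdd ((J k * X^j)^q : Γ).right = j*q := by
      rw [hdX, map_pow, hd]
      simp [mul_comm]
    rw [h2] at h1
    have h3 := congrArg F h1
    rw [map_pow, hFX, hFX, h.pw2, eq_comm, mul_eq_right] at h3
    rw [h1, (injective_iff_map_eq_one ι).1 h.inj _ h3, map_one, one_mul]
  have hXq : ∀ γ : Γ, Commute (X^q) γ := by
    intro γ
    have h1 : (γ * X * γ⁻¹)^q = X^(1*(q:ℤ)) := by
      have := hdec (γ * X * γ⁻¹)
      have h2 : Multiplicative.toAdd (γ * X * γ⁻¹ : Γ).right = 1 := by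
        have h3 : d (γ * X * γ⁻¹) = d X := by
          rw [map_mul d, map_mul d, map_inv, mul_comm, inv_mul_cancel_left]
        rw [hdX, h3]; rfl
      rw [h2] at this
      rw [this, hpw]
    rw [conj_pow, one_mul, zpow_natCast, mul_inv_eq_iff_eq_mul] at h1
    exact h1.symm
  have hconj : ∀ k, J (α k) = X * J k * X⁻¹ := by
    intro k
    have := inl_aut (φ := zpowersHom (MulAut K) α) (Multiplicative.ofAdd 1) k
    simpa [J, X] using this
  have hXN' : ∀ γ : Γ, Commute (X^N') γ := by
    intro γ
    obtain ⟨r, rfl⟩ := hqN'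
    rw [pow_mul]; exact (hXq γ).pow_left r
  have hxN : ∀ g : G, Commute (x^N) g := by
    intro g
    obtain ⟨r, rfl⟩ := hqN
    rw [pow_mul]; exact Commute.pow_left (h.cen g) r
  have htk : ∀ k, Commute t k := by
    intro k
    apply h.inj
    rw [map_mul, map_mul, ← h.xN]; exact hxN _
  have hat : α t = t := by
    apply h.inj
    rw [h.conj, ← h.xN, ← (hxN x).eq, mul_inv_cancel_right]
  have hJt : ∀ γ : Γ, Commute (J t) γ := by
    intro γ
    rw [hdec γ]
    refine Commute.mul_right ((htk _).map J) (Commute.zpow_right ?_ _)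
    have := hconj t
    rw [hat, eq_mul_inv_iff_mul_eq] at this
    exact this
  have hot := h.ordt hN
  let c : Γ := J t⁻¹ * X^N'
  have hcc : ∀ γ : Γ, Commute c γ := by
    intro γ
    change Commute (J t⁻¹ * X^N') γ
    rw [map_inv]
    exact (hJt γ).inv_left.mul_left (hXN' γ)
  let C : Subgroup Γ := Subgroup.zpowers c
  have hCn : C.Normal := by
    refine ⟨fun n hn g => ?_⟩
    obtain ⟨a, rfl⟩ := hn
    simp only
    rw [← ((hcc g).zpow_left a).eq, mul_inv_cancel_right]
    exact ⟨a, rfl⟩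
  have hcz : ∀ a : ℤ, c^a = J (t^(-a)) * X^((N':ℤ)*a) := by
    intro a
    change (J t⁻¹ * X^N')^a = _
    rw [((hXN' (J t⁻¹)).symm).mul_zpow, ← map_zpow, inv_zpow', zpow_mul, zpow_natCast]
  have hC : ∀ k j, J k * X^j ∈ C ↔ ∃ a : ℤ, j = N'*a ∧ k = t^(-a) := by
    intro k j
    constructor
    · rintro ⟨a, ha⟩
      simp only [hcz] at ha
      obtain ⟨h1, h2⟩ := hJX _ _ _ _ ha
      exact ⟨a, h2.symm, h1.symm⟩
    · rintro ⟨a, rfl, rfl⟩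
      exact ⟨a, hcz a⟩
  have hC1 : ∀ j : ℤ, X^j ∈ C ↔ ((q*N' : ℕ) : ℤ) ∣ j := by
    intro j
    have := hC 1 j
    rw [map_one, one_mul] at this
    rw [this]
    push_cast
    constructor
    · rintro ⟨a, rfl, h1⟩
      rw [eq_comm, ← orderOf_dvd_iff_zpow_eq_one, hot, dvd_neg] at h1
      rw [mul_comm]
      exact mul_dvd_mul_left _ h1
    · rintro ⟨a, rfl⟩
      refine ⟨q*a, by ring, ?_⟩
      rw [eq_comm, ← orderOf_dvd_iff_zpow_eq_one, hot, dvd_neg]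
      exact dvd_mul_right _ _
  let mk : Γ →* Γ ⧸ C := QuotientGroup.mk' C
  have hmk : ∀ γ, mk γ = 1 ↔ γ ∈ C := fun γ => QuotientGroup.eq_one_iff γ
  have hmks : Function.Surjective mk := QuotientGroup.mk'_surjective C
  have hxN2 : mk X^N' = mk (J t) := by
    rw [← map_pow, eq_comm, ← inv_mul_eq_one, ← map_inv, ← map_mul, hmk, ← map_inv]
    exact ⟨1, by simp [c]⟩
  refine ⟨Γ ⧸ C, inferInstance, mk X, mk.comp J, ?_⟩
  refine { inj := ?_, tor := ?_, rng := ?_, conj := ?_, xN := hxN2, ord := ?_, gen := ?_, cen := ?_, pw := ?_ }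
  · rw [injective_iff_map_eq_one]
    intro k hk
    rw [MonoidHom.comp_apply, hmk] at hk
    have h1 := hC k 0
    rw [zpow_zero, mul_one] at h1
    obtain ⟨a, ha, rfl⟩ := h1.1 hk
    have : a = 0 := by
      rcases mul_eq_zero.1 ha.symm with h2 | h2
      · exact absurd h2 (by exact_mod_cast hN'.ne')
      · exact h2
    simp [this]
  · intro k
    have := hpw k 0
    rw [zpow_zero, mul_one, zero_mul, zpow_zero] at this
    rw [MonoidHom.comp_apply, ← map_pow, this, map_one]
  · intro g hg
    obtain ⟨γ, rfl⟩ := hmks g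
    obtain ⟨k, j, rfl⟩ : ∃ k j, γ = J k * X^j := ⟨_, _, hdec γ⟩
    rw [← map_pow, hpw, hmk, hC1] at hg
    push_cast at hg
    rw [mul_comm j] at hg
    obtain ⟨a, rfl⟩ := Int.dvd_of_mul_dvd_mul_left (by exact_mod_cast hq.ne') hg
    refine ⟨k*t^a, ?_⟩
    rw [MonoidHom.comp_apply, map_mul, map_mul, map_mul, map_zpow, map_zpow, map_zpow, zpow_mul, zpow_natCast, hxN2]
  · intro k
    simp only [MonoidHom.comp_apply]
    rw [hconj, map_mul, map_mul, map_inv]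
  · have : ∀ j : ℤ, (orderOf (mk X) : ℤ) ∣ j ↔ ((q*N' : ℕ) : ℤ) ∣ j := by
      intro j
      rw [orderOf_dvd_iff_zpow_eq_one, ← map_zpow, hmk, hC1]
    apply Nat.dvd_antisymm
    · exact_mod_cast (this _).2 dvd_rfl
    · exact_mod_cast (this _).1 dvd_rfl
  · intro g
    obtain ⟨γ, rfl⟩ := hmks g
    refine ⟨γ.left, Multiplicative.toAdd γ.right, ?_⟩
    conv_lhs => rw [hdec γ]
    rw [map_mul, map_zpow]; rfl
  · intro g
    obtain ⟨γ, rfl⟩ := hmks g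
    rw [← map_pow, ← map_mul, ← map_mul, (hXq γ).eq]
  · intro a b
    obtain ⟨γ, rfl⟩ := hmks a
    obtain ⟨δ, rfl⟩ := hmks b
    rw [← map_mul, ← map_pow, ← map_pow, ← map_pow, ← map_mul]
    congr 1
    rw [hdec (γ*δ), hdec γ, hdec δ, hpw, hpw, hpw, ← zpow_add, ← hdec γ, ← hdec δ, ← add_mul]
    congr 2

end Rlz

/-- groups of order `p^(e+f)` and exponent `p^e` -/
structure Gd (p f e : ℕ) (G : Type) [Group G] : Prop where
  card : Nat.card G = p^(e+f)
  exp : Monoid.exponent G = p^e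

theorem Gd.ex {p f e : ℕ} (hp : p.Prime) (he : 1 ≤ e) {G : Type} [Group G] (h : Gd p f e G) :
    ∃ x : G, orderOf x = p^e := by
  have := Fact.mk hp
  obtain ⟨d, rfl⟩ : ∃ d, e = d+1 := ⟨e-1, by omega⟩
  by_contra hx
  push Not at hx
  have h1 : ∀ g : G, g^p^d = 1 := by
    intro g
    by_contra hg
    exact hx g (orderOf_eq_prime_pow hg (by rw [← h.exp]; exact Monoid.pow_exponent_eq_one g))
  have h2 := Monoid.exponent_dvd_of_forall_pow_eq_one h1
  rw [h.exp] at h2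
  have := (Nat.pow_dvd_pow_iff_le_right hp.one_lt).1 h2
  omega

theorem Gd.pow {p f e : ℕ} {G : Type} [Group G] (h : Gd p f e G) (g : G) : g^p^e = 1 := by
  rw [← h.exp]; exact Monoid.pow_exponent_eq_one g

theorem mkRlz {p f e : ℕ} (hp : p.Prime) (h2 : p ≠ 2) (hfe : f < e) {G : Type} [Group G] (h : Gd p f e G)
    {K : Type} [Group K] {α : MulAut K} {t : K} {x : G} {ι : K →* G} (ho : orderOf x = p^e)
    (inj : Function.Injective ι) (tor : ∀ k, (ι k)^p^f = 1) (rng : ∀ g : G, g^p^f = 1 → ∃ k, ι k = g)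
    (conj : ∀ k, ι (α k) = x * ι k * x⁻¹) (xN : x^(p^(e-f)) = ι t) : Rlz (p^f) (p^(e-f)) α t x ι := by
  obtain ⟨A1, A2, A3⟩ := powHom p hp h2 f e G x hfe h.card ho h.pow
  refine ⟨inj, tor, rng, conj, xN, ?_, ?_, A3, A1⟩
  · rw [ho, ← pow_add]; congr 1; omega
  · intro g
    obtain ⟨j, hj⟩ := A2 g
    have h3 : (g * x^(-j))^p^f = 1 := by
      rw [A1, hj, ← zpow_natCast, ← zpow_natCast, ← zpow_mul, ← zpow_mul, ← zpow_add]
      rw [show (((p^f:ℕ):ℤ) * j + -j * ((p^f:ℕ):ℤ)) = 0 by ring, zpow_zero]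
    obtain ⟨k, hk⟩ := rng _ h3
    exact ⟨k, j, by rw [hk]; simp⟩

theorem exRlz {p f e : ℕ} (hp : p.Prime) (h2 : p ≠ 2) (hfe : f < e) {G : Type} [Group G] (h : Gd p f e G) :
    ∃ (K : Type) (_ : Group K) (α : MulAut K) (t : K) (x : G) (ι : K →* G),
      Rlz (p^f) (p^(e-f)) α t x ι := by
  obtain ⟨x, ho⟩ := h.ex hp (by omega)
  obtain ⟨A1, A2, A3⟩ := powHom p hp h2 f e G x hfe h.card ho h.pow
  let K : Subgroup G := (MonoidHom.mk' (fun g : G => g^p^f) A1).ker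
  have hK : ∀ g, g ∈ K ↔ g^p^f = 1 := fun g => Iff.rfl
  have hKn : K.Normal := inferInstance
  refine ⟨K, inferInstance, MulAut.conjNormal x, ⟨x^(p^(e-f)), ?_⟩, x, K.subtype, ?_⟩
  · rw [hK, ← pow_mul, ← pow_add, Nat.sub_add_cancel hfe.le, h.pow x]
  · refine mkRlz hp h2 hfe h ho K.subtype_injective (fun k => k.2) (fun g hg => ⟨⟨g, hg⟩, rfl⟩) ?_ rfl
    intro k
    simp

theorem transfer {p f e e' : ℕ} (hp : p.Prime) (h2 : p ≠ 2) (hf : 1 ≤ f) (he : 2*f ≤ e) (he' : 2*f ≤ e')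
    {K L G G' H H' : Type} [Group K] [Group L] [Group G] [Group G'] [Group H] [Group H']
    {α : MulAut K} {t : K} {β : MulAut L} {s : L} {x : G} {x' : G'} {y : H} {y' : H'}
    {ι : K →* G} {ι' : K →* G'} {κ : L →* H} {κ' : L →* H'}
    (h1 : Rlz (p^f) (p^(e-f)) α t x ι) (h1' : Rlz (p^f) (p^(e'-f)) α t x' ι')
    (h3 : Rlz (p^f) (p^(e-f)) β s y κ) (h3' : Rlz (p^f) (p^(e'-f)) β s y' κ')
    (hH' : Gd p f e' H') (φ : G ≃* H) : Nonempty (G' ≃* H') := by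
  have := Fact.mk hp
  have hr : ι.range.map φ.toMonoidHom = κ.range := by
    ext g
    constructor
    · rintro ⟨_, ⟨k, rfl⟩, rfl⟩
      refine h3.rng _ ?_
      change (φ (ι k))^p^f = 1
      rw [← map_pow, h1.tor, map_one]
    · rintro ⟨l, rfl⟩
      obtain ⟨k, hk⟩ := h1.rng (φ.symm (κ l)) (by rw [← map_pow, h3.tor, map_one])
      exact ⟨ι k, ⟨k, rfl⟩, by rw [hk]; simp⟩
  let θ : K ≃* L := (MonoidHom.ofInjective h1.inj).trans
    (((φ.subgroupMap ι.range).trans (MulEquiv.subgroupCongr hr)).trans (MonoidHom.ofInjective h3.inj).symm)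
  have hθ : ∀ k, κ (θ k) = φ (ι k) := by
    intro k
    have : ∀ u : κ.range, κ ((MonoidHom.ofInjective h3.inj).symm u) = u := by
      intro u
      rw [← MonoidHom.ofInjective_apply h3.inj, MulEquiv.apply_symm_apply]
    exact this _
  clear_value θ
  obtain ⟨l, j, hx⟩ := h3.gen (φ x)
  have c1 : ∀ k, θ (α k) = l * (β^j) (θ k) * l⁻¹ := by
    intro k
    apply h3.inj
    rw [hθ, h1.conj, map_mul, map_mul, map_inv, hx, map_mul, map_mul, h3.conjz, hθ, map_inv]
    group
  have key : ∀ m, 2*f ≤ m → ∀ (M : Type) [Group M] (v : M) (μ : L →* M), Rlz (p^f) (p^(m-f)) β s v μ →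
      (μ l * v^j)^(p^(m-f)) = μ (s^j) := by
    intro m hm M _ v μ hh
    have e1 : p^(m-f) = p^f * p^(m-f-f) := by rw [← pow_add]; congr 1; omega
    rw [e1, pow_mul, hh.pw2, map_zpow, ← hh.xN, ← zpow_natCast, ← zpow_natCast, ← zpow_mul, ← zpow_mul, e1]
    congr 1; push_cast; ring
  have c2 : θ t = s^j := by
    apply h3.inj
    rw [hθ, ← h1.xN, map_pow, hx, key e he H y κ h3]
  have hw := key e' he' H' y' κ' h3'
  have hot := h1.ordt (pow_pos hp.pos _)
  have hR : Rlz (p^f) (p^(e'-f)) α t (κ' l * y'^j) (κ'.comp θ.toMonoidHom) := by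
    refine mkRlz hp h2 (by omega) hH' ?_ (h3'.inj.comp θ.injective) (fun k => h3'.tor _) ?_ ?_ ?_
    · obtain ⟨d, rfl⟩ : ∃ d, e' = d+1 := ⟨e'-1, by omega⟩
      refine orderOf_eq_prime_pow ?_ (hH'.pow _)
      intro h4
      have e2 : p^d = p^(d+1-f) * p^(f-1) := by rw [← pow_add]; congr 1; omega
      rw [e2, pow_mul, hw, ← c2, ← map_pow, ← map_pow] at h4
      have h5 := (injective_iff_map_eq_one θ).1 θ.injective _ ((injective_iff_map_eq_one κ').1 h3'.inj _ h4)
      have h6 := orderOf_dvd_of_pow_eq_one h5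
      rw [hot] at h6
      have := (Nat.pow_dvd_pow_iff_le_right hp.one_lt).1 h6
      omega
    · intro g hg
      obtain ⟨l, rfl⟩ := h3'.rng g hg
      exact ⟨θ.symm l, by simp⟩
    · intro k
      change κ' (θ (α k)) = _ * κ' (θ k) * _
      rw [c1, map_mul, map_mul, h3'.conjz, map_inv]
      group
    · rw [hw, ← c2]; rfl
  exact h1'.equiv_of hR (pow_pos hp.pos _)

/-- two groups realized by the same data -/
def Lnk (q N N' : ℕ) (G G' : Type) [Group G] [Group G'] : Prop :=
  ∃ (K : Type) (_ : Group K) (α : MulAut K) (t : K) (x : G) (ι : K →* G) (x' : G') (ι' : K →* G'),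
    Rlz q N α t x ι ∧ Rlz q N' α t x' ι'

theorem Lnk.symm {q N N' : ℕ} {G G' : Type} [Group G] [Group G'] (h : Lnk q N N' G G') : Lnk q N' N G' G := by
  obtain ⟨K, i, α, t, x, ι, x', ι', h1, h2⟩ := h
  exact ⟨K, i, α, t, x', ι', x, ι, h2, h1⟩

theorem Rlz.gd {p f e e' : ℕ} (hp : p.Prime) (hfe : f ≤ e) (hfe' : f ≤ e') {K G G' : Type} [Group K] [Group G] [Group G']
    {α : MulAut K} {t : K} {x : G} {x' : G'} {ι : K →* G} {ι' : K →* G'}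
    (h1 : Rlz (p^f) (p^(e-f)) α t x ι) (h1' : Rlz (p^f) (p^(e'-f)) α t x' ι') (h : Gd p f e G) :
    Gd p f e' G' := by
  have a1 := h1.card_eq (pow_pos hp.pos _) (pow_pos hp.pos _)
  have a2 := h1'.card_eq (pow_pos hp.pos _) (pow_pos hp.pos _)
  have e3 : p^f * p^(e'-f) = p^e' := by rw [← pow_add]; congr 1; omega
  constructor
  · have : Nat.card K = p^(2*f) := by
      rw [h.card] at a1
      have : p^(e+f) = p^(2*f) * p^(e-f) := by rw [← pow_add]; congr 1; omega
      rw [this] at a1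
      exact (Nat.eq_of_mul_eq_mul_right (pow_pos hp.pos _) a1).symm
    rw [a2, this, ← pow_add]; congr 1; omega
  · apply Nat.dvd_antisymm
    · apply Monoid.exponent_dvd_of_forall_pow_eq_one
      intro g
      rw [← e3, h1'.pow_exp]
    · rw [← e3, ← h1'.ord]
      exact Monoid.order_dvd_exponent x'

theorem Rlz.map {q N : ℕ} {K G H : Type} [Group K] [Group G] [Group H] {α : MulAut K} {t : K} {x : G}
    {ι : K →* G} (h : Rlz q N α t x ι) (φ : G ≃* H) : Rlz q N α t (φ x) (φ.toMonoidHom.comp ι) := by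
  have hs := φ.surjective
  refine ⟨φ.injective.comp h.inj, fun k => ?_, fun g hg => ?_, fun k => ?_, ?_, ?_, fun g => ?_, fun g => ?_, fun a b => ?_⟩
  · change (φ (ι k))^q = 1
    rw [← map_pow, h.tor, map_one]
  · obtain ⟨k, hk⟩ := h.rng (φ.symm g) (by rw [← map_pow, hg, map_one])
    exact ⟨k, by simp [hk]⟩
  · change φ (ι (α k)) = φ x * φ (ι k) * (φ x)⁻¹
    rw [h.conj]; simp
  · rw [← map_pow, h.xN]; rfl
  · rw [← h.ord]; exact MulEquiv.orderOf_eq φ x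
  · obtain ⟨g, rfl⟩ := hs g
    obtain ⟨k, j, hk⟩ := h.gen g
    exact ⟨k, j, by rw [hk]; simp⟩
  · obtain ⟨g, rfl⟩ := hs g
    rw [← map_pow, ← map_mul, ← map_mul, h.cen]
  · obtain ⟨a, rfl⟩ := hs a
    obtain ⟨b, rfl⟩ := hs b
    rw [← map_mul, ← map_pow, ← map_pow, ← map_pow, ← map_mul, h.pw]

theorem exGroup {T G : Type} [Group G] (E : T ≃ G) : ∃ _ : Group T, Nonempty (G ≃* T) := by
  letI := E.group
  exact ⟨inferInstance, ⟨(E.mulEquiv).symm⟩⟩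

theorem exLnk {p f e e' : ℕ} (hp : p.Prime) (h2 : p ≠ 2) (hf : 1 ≤ f) (he : 2*f ≤ e) (he' : 2*f ≤ e')
    {G : Type} [Group G] (h : Gd p f e G) (m : ℕ) (hm : m = p^(e'+f)) :
    ∃ s : Group (Fin m), Gd p f e' (Fin m) ∧ Lnk (p^f) (p^(e-f)) (p^(e'-f)) G (Fin m) := by
  obtain ⟨K, _, α, t, x, ι, h1⟩ := exRlz hp h2 (by omega) h
  obtain ⟨G', _, x', ι', h1'⟩ := h1.construct (pow_pos hp.pos _) (pow_pos hp.pos _) (pow_dvd_pow _ (by omega))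
    (p^(e'-f)) (pow_pos hp.pos _) (pow_dvd_pow _ (by omega))
  have hG' := h1.gd hp (by omega) (by omega) h1' h
  have : Finite G' := Nat.finite_of_card_ne_zero (by rw [hG'.card]; exact pow_ne_zero _ hp.ne_zero)
  let E : Fin m ≃ G' := (Finite.equivFinOfCardEq (hG'.card.trans hm.symm)).symm
  obtain ⟨s, ⟨φ⟩⟩ := exGroup E
  have h4 := h1'.map φ
  exact ⟨s, h1.gd hp (by omega) (by omega) h4 h, K, _, α, t, x, ι, _, _, h1, h4⟩

theorem Lnk.func {p f e e' : ℕ} (hp : p.Prime) (h2 : p ≠ 2) (hf : 1 ≤ f) (he : 2*f ≤ e) (he' : 2*f ≤ e')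
    {G G' H H' : Type} [Group G] [Group G'] [Group H] [Group H'] (hH' : Gd p f e' H')
    (h1 : Lnk (p^f) (p^(e-f)) (p^(e'-f)) G G') (h3 : Lnk (p^f) (p^(e-f)) (p^(e'-f)) H H')
    (φ : G ≃* H) : Nonempty (G' ≃* H') := by
  obtain ⟨K, _, α, t, x, ι, x', ι', a, b⟩ := h1
  obtain ⟨L, _, β, s, y, κ, y', κ', c, d⟩ := h3
  exact transfer hp h2 hf he he' a b c d hH' φ


theorem gd_iff {p n f : ℕ} (hf : 1 ≤ f) (hn : 3 * f ≤ n) (s : Group (Fin (p^n))) :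
    (∃ e : ℕ, Monoid.exponent (Fin (p ^ n)) = p ^ e ∧ n - e = f) ↔ Gd p f (n-f) (Fin (p^n)) := by
  constructor
  · rintro ⟨e, h1, h2⟩
    have : e = n - f := by omega
    subst this
    exact ⟨by rw [Nat.card_fin]; congr 1; omega, h1⟩
  · intro h
    exact ⟨n-f, h.exp, by omega⟩

theorem quot_card {A B : Type} {r : A → A → Prop} {r' : B → B → Prop} (hr : Equivalence r) (hr' : Equivalence r')
    (R : A → B → Prop) (t1 : ∀ a, ∃ b, R a b) (t2 : ∀ b, ∃ a, R a b)
    (f1 : ∀ a b c d, R a b → R c d → r a c → r' b d) (f2 : ∀ a b c d, R a b → R c d → r' b d → r a c) :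
    Nat.card (Quot r) = Nat.card (Quot r') := by
  choose F hF using t1
  let Q : Quot r → Quot r' := Quot.lift (fun a => Quot.mk r' (F a))
    (fun a c hac => Quot.sound (f1 _ _ _ _ (hF a) (hF c) hac))
  refine Nat.card_eq_of_bijective Q ⟨?_, ?_⟩
  · rintro ⟨a⟩ ⟨c⟩ h
    exact Quot.sound (f2 _ _ _ _ (hF a) (hF c) (hr'.eqvGen_iff.1 (Quot.eqvGen_exact h)))
  · rintro ⟨b⟩
    obtain ⟨a, ha⟩ := t2 b
    exact ⟨Quot.mk _ a, Quot.sound (f1 _ _ _ _ (hF a) ha (hr.refl a))⟩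

theorem iso_equiv (N : ℕ) (Q : Group (Fin N) → Prop) : Equivalence fun s t : {s : Group (Fin N) // Q s} =>
    Nonempty (@MulEquiv (Fin N) (Fin N) (mulOfGroup _ s.1) (mulOfGroup _ t.1)) := by
  refine ⟨fun s => ⟨?_⟩, fun {s t} h => ?_, fun {s t u} h h' => ?_⟩
  · letI := mulOfGroup _ s.1
    exact MulEquiv.refl _
  · obtain ⟨h⟩ := h
    exact ⟨@MulEquiv.symm _ _ (mulOfGroup _ s.1) (mulOfGroup _ t.1) h⟩
  · obtain ⟨h⟩ := h
    obtain ⟨h'⟩ := h'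
    exact ⟨@MulEquiv.trans _ _ _ (mulOfGroup _ s.1) (mulOfGroup _ t.1) (mulOfGroup _ u.1) h h'⟩

/-- Fix an integer `f ≥ 3`.  For every prime `p > f + 1`,
the number `Ψ_{n,f}^p` of isomorphism classes of groups of order `p ^ n` with
coexponent `f` is independent of `n` for `n ≥ 3f`. -/
theorem psi_coexp_stable (f : ℕ) (hf : 3 ≤ f) (p : ℕ) (hp : p.Prime) (hpf : p > f + 1)
    (n n' : ℕ) (hn : 3 * f ≤ n) (hn' : 3 * f ≤ n') :
    PsiCoexp p n f = PsiCoexp p n' f := by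
  have h2 : p ≠ 2 := by omega
  have hf1 : 1 ≤ f := by omega
  unfold PsiCoexp groupClassCount
  refine quot_card (iso_equiv _ _) (iso_equiv _ _)
    (fun s t => @Lnk (p^f) (p^(n-f-f)) (p^(n'-f-f)) (Fin (p^n)) (Fin (p^n')) s.1 t.1) ?_ ?_ ?_ ?_
  · rintro ⟨s, hs⟩
    obtain ⟨t, ht, hl⟩ := @exLnk p f (n-f) (n'-f) hp h2 hf1 (by omega) (by omega) _ s
      ((gd_iff hf1 hn s).1 hs) (p^n') (by congr 1; omega)
    exact ⟨⟨t, (gd_iff hf1 hn' t).2 ht⟩, hl⟩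
  · rintro ⟨s, hs⟩
    obtain ⟨t, ht, hl⟩ := @exLnk p f (n'-f) (n-f) hp h2 hf1 (by omega) (by omega) _ s
      ((gd_iff hf1 hn' s).1 hs) (p^n) (by congr 1; omega)
    exact ⟨⟨t, (gd_iff hf1 hn t).2 ht⟩, @Lnk.symm _ _ _ _ _ s t hl⟩
  · rintro ⟨a, ha⟩ ⟨b, hb⟩ ⟨c, hc⟩ ⟨d, hd⟩ hab hcd ⟨φ⟩
    exact @Lnk.func p f (n-f) (n'-f) hp h2 hf1 (by omega) (by omega) _ _ _ _ a b c d
      ((gd_iff hf1 hn' d).1 hd) hab hcd φ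
  · rintro ⟨a, ha⟩ ⟨b, hb⟩ ⟨c, hc⟩ ⟨d, hd⟩ hab hcd ⟨φ⟩
    exact @Lnk.func p f (n'-f) (n-f) hp h2 hf1 (by omega) (by omega) _ _ _ _ b a d c
      ((gd_iff hf1 hn c).1 hc) (@Lnk.symm _ _ _ _ _ a b hab) (@Lnk.symm _ _ _ _ _ c d hcd) φ
end

section
/- Let P be a finite regular p-group. Then the nilpotency class of P is at most f(P) + 1. -/
/-- `℧_1(H) = ⟨h^p : h ∈ H⟩` for a subgroup `H`. -/
def MhoOne (p : ℕ) {P : Type} [Group P] (H : Subgroup P) : Subgroup P :=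
  Subgroup.closure {y : P | ∃ x ∈ H, y = x ^ p}

/-- A `p`-group `P` is regular if for all `x y : P` there is
`z ∈ ℧_1(γ_2(⟨x,y⟩))` with `x^p * y^p = (x*y)^p * z`. -/
def IsRegularPGroup (p : ℕ) (P : Type) [Group P] : Prop :=
  ∀ x y : P,
    ∃ z ∈ MhoOne p ⁅Subgroup.closure {x, y}, Subgroup.closure {x, y}⁆,
      x ^ p * y ^ p = (x * y) ^ p * z

section Aux
open scoped commutatorElement

open Subgroup in
lemma aux_exists_normal {G : Type} [Group G] [Finite G] [Group.IsNilpotent G] (x : G)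
    (h : zpowers x ≠ ⊤) : ∃ M : Subgroup G, M.Normal ∧ IsCoatom M ∧ x ∈ M := by
  rcases eq_top_or_exists_le_coatom (zpowers x) with h1 | ⟨M, hM, hle⟩
  · exact absurd h1 h
  · exact ⟨M, NormalizerCondition.normal_of_coatom M Group.normalizerCondition_of_isNilpotent hM, hM,
      hle (mem_zpowers x)⟩

/-- Commuting, or `x, yxy⁻¹` generate a smaller subgroup. -/
lemma aux_lt {G : Type} [Group G] [Finite G] [Group.IsNilpotent G] (x y : G)
    (hc : ¬ Commute x y) :
    Subgroup.closure {y * x * y⁻¹, x⁻¹} < Subgroup.closure {x, y} := by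
  set H := Subgroup.closure {x, y} with hH
  have hx : x ∈ H := Subgroup.subset_closure (by simp)
  have hy : y ∈ H := Subgroup.subset_closure (by simp)
  have hne : Subgroup.zpowers (⟨x, hx⟩ : H) ≠ ⊤ := by
    intro h
    have : (⟨y, hy⟩ : H) ∈ Subgroup.zpowers (⟨x, hx⟩ : H) := by rw [h]; trivial
    obtain ⟨k, hk⟩ := Subgroup.mem_zpowers_iff.1 this
    have hk' : x ^ k = y := by simpa using congrArg Subtype.val hk
    exact hc (hk' ▸ (Commute.refl x).zpow_right k)
  obtain ⟨M, hM, hco, hxM⟩ := aux_exists_normal _ hne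
  have h1 : Subgroup.closure {y * x * y⁻¹, x⁻¹} ≤ M.map H.subtype := by
    rw [Subgroup.closure_le]
    rintro u (rfl | rfl)
    · exact ⟨_, hM.conj_mem _ hxM ⟨y, hy⟩, rfl⟩
    · exact ⟨_, M.inv_mem hxM, rfl⟩
  refine lt_of_le_of_lt h1 (lt_of_le_of_ne (Subgroup.map_subtype_le M) ?_)
  intro h
  apply hco.1
  rw [eq_top_iff]
  intro g _
  have : (g : G) ∈ M.map H.subtype := by rw [h]; exact g.2
  obtain ⟨g', hg', e⟩ := this
  rwa [← Subtype.ext e]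

lemma aux_comm_le {G : Type} [Group G] (S : Subgroup G) (x y : G)
    (hS : ∀ g ∈ Subgroup.closure {x, y}, ∀ s ∈ S, g * s * g⁻¹ ∈ S) (hxy : ⁅y, x⁆ ∈ S) :
    ⁅Subgroup.closure {x, y}, Subgroup.closure {x, y}⁆ ≤ S := by
  have hinv : ∀ a b : G, ⁅a, b⁆ ∈ S → ⁅b, a⁆ ∈ S := fun a b h => by
    rw [← commutatorElement_inv]; exact S.inv_mem h
  have key : ∀ g : G, ⁅g, x⁆ ∈ S → ⁅g, y⁆ ∈ S → ∀ h ∈ Subgroup.closure {x, y}, ⁅g, h⁆ ∈ S := by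
    intro g hgx hgy h hh
    induction hh using Subgroup.closure_induction with
    | mem u hu =>
      rcases hu with rfl | rfl
      · exact hgx
      · exact hgy
    | one => simp
    | mul a b ha hb iha ihb =>
      have : ⁅g, a * b⁆ = ⁅g, a⁆ * (a * ⁅g, b⁆ * a⁻¹) := by
        simp only [commutatorElement_def]; group
      rw [this]
      exact S.mul_mem iha (hS a ha _ ihb)
    | inv a ha iha =>
      have : ⁅g, a⁻¹⁆ = a⁻¹ * ⁅g, a⁆⁻¹ * a⁻¹⁻¹ := by
        simp only [commutatorElement_def]; group
      rw [this]
      exact hS _ (inv_mem ha) _ (S.inv_mem iha)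
  rw [Subgroup.commutator_le]
  intro g hg h hh
  refine key g ?_ ?_ h hh
  · exact hinv _ _ (key x (by simp) (hinv _ _ hxy) g hg)
  · exact hinv _ _ (key y hxy (by simp) g hg)

/-- If the elements of order `p` in `⟨x,y⟩'` are closed under product and `[y,x]^p=1`. -/
lemma aux_step {p : ℕ} {P : Type} [Group P] (hreg : IsRegularPGroup p P) (x y : P)
    (hmul : ∀ u ∈ ⁅Subgroup.closure {x, y}, Subgroup.closure {x, y}⁆,
      ∀ v ∈ ⁅Subgroup.closure {x, y}, Subgroup.closure {x, y}⁆,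
      u ^ p = 1 → v ^ p = 1 → (u * v) ^ p = 1)
    (hxy : ⁅y, x⁆ ^ p = 1) : x ^ p * y ^ p = (x * y) ^ p := by
  set H := Subgroup.closure {x, y} with hH
  have hx : x ∈ H := Subgroup.subset_closure (by simp)
  have hy : y ∈ H := Subgroup.subset_closure (by simp)
  let S : Subgroup P :=
    { carrier := {u | u ∈ ⁅H, H⁆ ∧ u ^ p = 1}
      one_mem' := ⟨one_mem _, one_pow _⟩
      mul_mem' := fun {a b} ha hb => ⟨mul_mem ha.1 hb.1, hmul a ha.1 b hb.1 ha.2 hb.2⟩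
      inv_mem' := fun {a} ha => ⟨inv_mem ha.1, by rw [inv_pow, ha.2, inv_one]⟩ }
  have hle : ⁅H, H⁆ ≤ S := by
    apply aux_comm_le S x y
    · rintro g hg s ⟨hs, hs'⟩
      refine ⟨?_, by rw [conj_pow, hs']; simp⟩
      have : g * s * g⁻¹ = ⁅g, s⁆ * s := by simp [commutatorElement_def]
      rw [this]
      refine mul_mem (Subgroup.commutator_mem_commutator hg ?_) hs
      exact (Subgroup.commutator_le.2 fun a ha b hb => by
        rw [commutatorElement_def]
        exact mul_mem (mul_mem (mul_mem ha hb) (inv_mem ha)) (inv_mem hb)) hs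
    · exact ⟨Subgroup.commutator_mem_commutator hy hx, hxy⟩
  obtain ⟨z, hz, e⟩ := hreg x y
  have : z = 1 := by
    have h2 : MhoOne p ⁅H, H⁆ ≤ ⊥ := by
      rw [MhoOne, Subgroup.closure_le]
      rintro _ ⟨u, hu, rfl⟩
      exact (hle hu).2
    exact Subgroup.mem_bot.1 (h2 hz)
  rw [e, this, mul_one]

lemma aux_A {p : ℕ} {P : Type} [Group P] [Finite P] [Group.IsNilpotent P]
    (hreg : IsRegularPGroup p P) (x y : P) (h : x ^ p * y ^ p = 1) : (x * y) ^ p = 1 := by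
  suffices ∀ H : Subgroup P, ∀ x y : P, Subgroup.closure {x, y} = H →
      x ^ p * y ^ p = 1 → (x * y) ^ p = 1 from this _ x y rfl h
  clear h x y
  intro H
  induction H using WellFoundedLT.induction with
  | ind H ih =>
  intro x y hH h
  by_cases hc : Commute x y
  · rw [hc.mul_pow, h]
  have hlt := aux_lt x y hc
  rw [hH] at hlt
  rw [← aux_step hreg x y ?_ ?_, h]
  · rw [hH]
    have hne : H ≠ ⊥ := by
      rintro rfl
      exact not_lt_bot hlt
    have hlt' : ⁅H, H⁆ < H := Group.IsSolvable.commutator_lt_of_ne_bot hne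
    intro u hu v hv hu' hv'
    refine ih _ (lt_of_le_of_lt ?_ hlt') u v rfl (by rw [hu', hv', mul_one])
    rw [Subgroup.closure_le]
    rintro _ (rfl | rfl) <;> assumption
  · have := ih _ hlt (y * x * y⁻¹) x⁻¹ rfl ?_
    · rwa [commutatorElement_def]
    · rw [conj_pow, inv_pow, mul_inv_eq_one]
      have e : x ^ p = (y ^ p)⁻¹ := mul_eq_one_iff_eq_inv.1 h
      rw [e, mul_inv_eq_iff_eq_mul]
      exact (((Commute.refl y).pow_right p).inv_right).eq

lemma aux_B {p : ℕ} {P : Type} [Group P] [Finite P] [Group.IsNilpotent P]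
    (hreg : IsRegularPGroup p P) (x y : P) (h : x ^ p = 1) : (x * y) ^ p = y ^ p := by
  rw [← aux_step hreg x y, h, one_mul]
  · intro u _ v _ hu hv
    exact aux_A hreg u v (by rw [hu, hv, mul_one])
  · rw [commutatorElement_def]
    exact aux_A hreg _ _ (by rw [conj_pow, inv_pow, h]; simp)

lemma aux_quot {p : ℕ} {P : Type} [Group P] (hreg : IsRegularPGroup p P)
    (N : Subgroup P) [N.Normal] : IsRegularPGroup p (P ⧸ N) := by
  intro x y
  obtain ⟨x, rfl⟩ := QuotientGroup.mk'_surjective N x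
  obtain ⟨y, rfl⟩ := QuotientGroup.mk'_surjective N y
  obtain ⟨z, hz, e⟩ := hreg x y
  refine ⟨QuotientGroup.mk' N z, ?_, by simp only [← map_pow, ← map_mul, e]⟩
  have h1 : Subgroup.closure {QuotientGroup.mk' N x, QuotientGroup.mk' N y}
      = (Subgroup.closure {x, y}).map (QuotientGroup.mk' N) := by
    rw [MonoidHom.map_closure, Set.image_pair]
  rw [h1, ← Subgroup.map_commutator]
  have h2 : MhoOne p ⁅Subgroup.closure {x, y}, Subgroup.closure {x, y}⁆ ≤
      (MhoOne p (⁅Subgroup.closure {x, y}, Subgroup.closure {x, y}⁆.map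
        (QuotientGroup.mk' N))).comap (QuotientGroup.mk' N) := by
    conv_lhs => rw [MhoOne]
    rw [Subgroup.closure_le]
    rintro _ ⟨u, hu, rfl⟩
    apply Subgroup.subset_closure
    exact ⟨_, ⟨u, hu, rfl⟩, map_pow _ _ _⟩
  exact h2 hz

/-- `p`-th powers lie in the upper central series. -/
lemma aux_ucs {p : ℕ} {P : Type} [Group P] [Finite P] [Group.IsNilpotent P]
    (hreg : IsRegularPGroup p P) (m : ℕ)
    (hm : ∀ u ∈ Subgroup.lowerCentralSeries (⊤ : Subgroup P) m, u ^ p = 1) :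
    ∀ j ≤ m, ∀ u ∈ Subgroup.lowerCentralSeries (⊤ : Subgroup P) (m - j),
      u ^ p ∈ Subgroup.upperCentralSeries P j := by
  intro j
  induction j with
  | zero => intro _ u hu; rw [hm u hu]; exact one_mem _
  | succ j ih =>
    intro hj u hu
    rw [Subgroup.mem_upperCentralSeries_succ_iff]
    intro y
    set N := Subgroup.upperCentralSeries P j with hN
    have h1 : ⁅y, u⁆ ∈ Subgroup.lowerCentralSeries (⊤ : Subgroup P) (m - j) := by
      rw [show m - j = (m - (j+1)) + 1 by omega, Subgroup.lowerCentralSeries_succ,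
        Subgroup.commutator_comm]
      exact Subgroup.commutator_mem_commutator trivial hu
    have h2 := ih (by omega) _ h1
    have hq := aux_quot hreg N
    have h3 := aux_B hq ((⁅y, u⁆ : P) : P ⧸ N) (u : P ⧸ N)
      (by rw [← QuotientGroup.mk_pow]; exact (QuotientGroup.eq_one_iff _).2 h2)
    rw [← QuotientGroup.mk_mul, ← QuotientGroup.mk_pow, ← QuotientGroup.mk_pow] at h3
    rw [show ⁅y, u⁆ * u = y * u * y⁻¹ by simp [commutatorElement_def], conj_pow] at h3
    rw [← commutatorElement_inv]
    apply inv_mem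
    rw [← QuotientGroup.eq_one_iff, commutatorElement_def, QuotientGroup.mk_mul, h3,
      ← QuotientGroup.mk_mul, mul_inv_cancel, QuotientGroup.mk_one]

lemma aux_lcs_ucs {P : Type} [Group P] (m i : ℕ)
    (h : Subgroup.lowerCentralSeries (⊤ : Subgroup P) i ≤ Subgroup.upperCentralSeries P m) :
    Subgroup.lowerCentralSeries (⊤ : Subgroup P) (i + m) = ⊥ := by
  induction m generalizing i with
  | zero => exact le_bot_iff.1 h
  | succ m ih =>
    rw [show i + (m + 1) = (i + 1) + m by omega]
    apply ih
    rw [Subgroup.lowerCentralSeries_succ]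
    exact (Subgroup.commutator_mono h le_rfl).trans (Subgroup.commutator_upperCentralSeries_top_le P m)

lemma aux_lcs_quot {P : Type} [Group P] (N : Subgroup P) [N.Normal] (i : ℕ)
    (h : Subgroup.lowerCentralSeries (⊤ : Subgroup (P ⧸ N)) i = ⊥) :
    Subgroup.lowerCentralSeries (⊤ : Subgroup P) i ≤ N := by
  have := Subgroup.map_lowerCentralSeries (⊤ : Subgroup P) (QuotientGroup.mk' N) i
  rw [Subgroup.map_top_of_surjective _ (QuotientGroup.mk'_surjective N), h,
    Subgroup.map_eq_bot_iff, QuotientGroup.ker_mk'] at this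
  exact this

lemma aux_comm_lcs {P : Type} [Group P] (h : ∀ a b : P, a * b = b * a) :
    Subgroup.lowerCentralSeries (⊤ : Subgroup P) 1 = ⊥ := by
  rw [Subgroup.lowerCentralSeries_succ, eq_bot_iff, Subgroup.commutator_le]
  intro a _ b _
  rw [Subgroup.mem_bot, commutatorElement_def, h a b]
  simp

/-- A group of order `p^v`, `v ≥ 2`, has class at most `v-1`. -/
lemma aux_class {p : ℕ} (hp : p.Prime) (v : ℕ) : ∀ (G : Type) [Group G] [Finite G],
    Nat.card G = p ^ v → 2 ≤ v → Subgroup.lowerCentralSeries (⊤ : Subgroup G) (v - 1) = ⊥ := by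
  have := Fact.mk hp
  induction v using Nat.strong_induction_on with
  | _ v ih =>
  intro G _ _ hG hv
  have hpG : IsPGroup p G := IsPGroup.of_card hG
  have : Nontrivial G := by
    apply Finite.one_lt_card_iff_nontrivial.1
    rw [hG]; exact Nat.one_lt_pow (by omega) hp.one_lt
  obtain ⟨u, hu, hGu⟩ : ∃ u ≤ v, Nat.card (G ⧸ Subgroup.center G) = p ^ u :=
    (Nat.dvd_prime_pow hp).1 (hG ▸ Subgroup.card_quotient_dvd_card _)
  have huv : u < v := by
    refine lt_of_le_of_ne hu ?_
    rintro rfl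
    have h1 := Subgroup.card_eq_card_quotient_mul_card_subgroup (Subgroup.center G)
    have h2 : 1 < Nat.card (Subgroup.center G) :=
      Finite.one_lt_card_iff_nontrivial.2 hpG.center_nontrivial
    rw [hG, hGu] at h1
    have : 0 < p ^ u := pow_pos hp.pos _
    nlinarith
  by_cases hu2 : 2 ≤ u
  · have h1 := aux_lcs_quot _ _ (ih u huv (G ⧸ Subgroup.center G) hGu hu2)
    rw [← Subgroup.upperCentralSeries_one] at h1
    have h2 := aux_lcs_ucs _ _ h1
    exact le_bot_iff.1 (h2 ▸ Subgroup.lowerCentralSeries_antitone _ (by omega))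
  · have : IsCyclic (G ⧸ Subgroup.center G) := by
      apply isCyclic_of_card_dvd_prime (p := p)
      rw [hGu]
      exact (pow_dvd_pow p (show u ≤ 1 by omega)).trans (by simp)
    have := aux_comm_lcs (commutative_of_cyclic_center_quotient
      (QuotientGroup.mk' (Subgroup.center G)) (by simp))
    exact le_bot_iff.1 (this ▸ Subgroup.lowerCentralSeries_antitone _ (by omega))

instance aux_mho_normal (p : ℕ) (P : Type) [Group P] : (MhoOne p (⊤ : Subgroup P)).Normal := by
  constructor
  intro n hn g
  have : MhoOne p (⊤ : Subgroup P) ≤ (MhoOne p (⊤ : Subgroup P)).comap (MulAut.conj g).toMonoidHom := by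
    conv_lhs => rw [MhoOne]
    rw [Subgroup.closure_le]
    rintro _ ⟨u, hu, rfl⟩
    exact Subgroup.subset_closure ⟨g * u * g⁻¹, trivial, by simp⟩
  exact this hn

/-- If `P/℧₁(P)` is cyclic, so is `P`. -/
lemma aux_cyc {p n : ℕ} (hp : p.Prime) (P : Type) [Group P] [Finite P] [Group.IsNilpotent P]
    (hcard : Nat.card P = p ^ n) [IsCyclic (P ⧸ MhoOne p (⊤ : Subgroup P))] :
    ∀ a b : P, a * b = b * a := by
  obtain ⟨g, hg⟩ := IsCyclic.exists_generator (α := P ⧸ MhoOne p (⊤ : Subgroup P))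
  obtain ⟨x, rfl⟩ := QuotientGroup.mk'_surjective _ g
  by_cases hx : Subgroup.zpowers x = ⊤
  · intro a b
    obtain ⟨i, rfl⟩ := Subgroup.mem_zpowers_iff.1 (hx ▸ Subgroup.mem_top a)
    obtain ⟨j, rfl⟩ := Subgroup.mem_zpowers_iff.1 (hx ▸ Subgroup.mem_top b)
    exact ((Commute.refl x).zpow_zpow i j).eq
  exfalso
  obtain ⟨M, hM, hco, hxM⟩ := aux_exists_normal x hx
  have : IsSimpleGroup (P ⧸ M) := by
    have : Nontrivial (P ⧸ M) := QuotientGroup.nontrivial_iff.2 hco.1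
    constructor
    intro K _
    rcases hco.le_iff.1 (QuotientGroup.le_comap_mk' M K) with h | h
    · right
      rw [← Subgroup.map_comap_eq_self_of_surjective (QuotientGroup.mk'_surjective M) K, h,
        Subgroup.map_top_of_surjective _ (QuotientGroup.mk'_surjective M)]
    · left
      rw [← Subgroup.map_comap_eq_self_of_surjective (QuotientGroup.mk'_surjective M) K, h]
      simp
  have hpr : (Nat.card (P ⧸ M)).Prime := by
    have := Fact.mk hp
    have hpQ : IsPGroup p (P ⧸ M) := (IsPGroup.of_card hcard).to_quotient M
    have := hpQ.center_nontrivial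
    have hc : Subgroup.center (P ⧸ M) = ⊤ := by
      rcases IsSimpleGroup.eq_bot_or_eq_top_of_normal (Subgroup.center (P ⧸ M)) inferInstance with h | h
      · exact absurd h ((Subgroup.nontrivial_iff_ne_bot _).1 inferInstance)
      · exact h
    let : CommGroup (P ⧸ M) := Group.commGroupOfCenterEqTop hc
    exact IsSimpleGroup.prime_card
  have hp' : Nat.card (P ⧸ M) = p := by
    have : Nat.card (P ⧸ M) ∣ p ^ n := hcard ▸ Subgroup.card_quotient_dvd_card _
    exact (Nat.prime_dvd_prime_iff_eq hpr hp).1 (hpr.dvd_of_dvd_pow this)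
  have hle : MhoOne p (⊤ : Subgroup P) ≤ M := by
    rw [MhoOne, Subgroup.closure_le]
    rintro _ ⟨u, _, rfl⟩
    rw [SetLike.mem_coe, ← QuotientGroup.eq_one_iff, QuotientGroup.mk_pow, ← hp']
    exact pow_card_eq_one'
  apply hco.1
  rw [eq_top_iff]
  intro y _
  obtain ⟨k, hk⟩ := Subgroup.mem_zpowers_iff.1 (hg (QuotientGroup.mk' _ y))
  rw [← map_zpow] at hk
  have := hle (QuotientGroup.eq.1 hk)
  simpa using M.mul_mem (M.zpow_mem hxM k) this

theorem aux_main (p : ℕ) (hp : p.Prime) (n : ℕ) : ∀ (e : ℕ) (P : Type) [Group P] [Finite P]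
    (_ : Nat.card P = p ^ n) (_ : Monoid.exponent P = p ^ e)
    (_ : IsRegularPGroup p P),
    Subgroup.lowerCentralSeries (⊤ : Subgroup P) ((n - e) + 1) = ⊥ := by
  have := Fact.mk hp
  induction n using Nat.strong_induction_on with
  | _ n ih =>
  intro e P _ _ hcard hexp hreg
  have hpP : IsPGroup p P := IsPGroup.of_card hcard
  have : Group.IsNilpotent P := hpP.isNilpotent
  have hanti : ∀ {i j : ℕ}, i ≤ j → Subgroup.lowerCentralSeries (⊤ : Subgroup P) i = ⊥ →
      Subgroup.lowerCentralSeries (⊤ : Subgroup P) j = ⊥ := fun hij h =>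
    le_bot_iff.1 (h ▸ Subgroup.lowerCentralSeries_antitone _ hij)
  by_cases hcomm : ∀ a b : P, a * b = b * a
  · exact hanti (by omega) (aux_comm_lcs hcomm)
  have he : e ≠ 0 := by
    rintro rfl
    rw [pow_zero, Monoid.exp_eq_one_iff] at hexp
    exact hcomm fun a b => Subsingleton.elim _ _
  let Ω : Subgroup P :=
    { carrier := {u | u ^ p = 1}
      one_mem' := one_pow _
      mul_mem' := fun {a b} (ha : a ^ p = 1) (hb : b ^ p = 1) =>
        aux_A hreg a b (by rw [ha, hb, mul_one])
      inv_mem' := fun {a} (ha : a ^ p = 1) => by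
        change a⁻¹ ^ p = 1
        rw [inv_pow, ha, inv_one] }
  have hΩ : ∀ u, u ∈ Ω ↔ u ^ p = 1 := fun u => Iff.rfl
  have : Ω.Normal := ⟨fun u hu g => by
    rw [hΩ] at *
    rw [conj_pow, hu]; simp⟩
  obtain ⟨w, hw, hΩw⟩ : ∃ w ≤ n, Nat.card Ω = p ^ w :=
    (Nat.dvd_prime_pow hp).1 (hcard ▸ Subgroup.card_subgroup_dvd_card _)
  have hmulΩ := Subgroup.card_eq_card_quotient_mul_card_subgroup Ω
  have hQ : Nat.card (P ⧸ Ω) = p ^ (n - w) := by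
    rw [hcard, hΩw, show n = (n - w) + w by omega, pow_add] at hmulΩ
    have := Nat.eq_of_mul_eq_mul_right (pow_pos hp.pos w) hmulΩ
    exact this.symm
  have hw1 : 1 ≤ w := by
    rw [Nat.one_le_iff_ne_zero]
    rintro rfl
    rw [pow_zero, Subgroup.card_eq_one] at hΩw
    have hd : p ∣ Nat.card P := by
      have : p ^ e ∣ Nat.card P := hexp ▸ Group.exponent_dvd_nat_card
      exact (dvd_pow_self p he).trans this
    obtain ⟨g, hg⟩ := exists_prime_orderOf_dvd_card' p hd
    have : g ∈ Ω := (hΩ g).2 (hg ▸ pow_orderOf_eq_one g)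
    rw [hΩw, Subgroup.mem_bot] at this
    rw [this, orderOf_one] at hg
    exact hp.one_lt.ne hg
  have hexpQ : Monoid.exponent (P ⧸ Ω) = p ^ (e - 1) := by
    have key : ∀ k, Monoid.exponent (P ⧸ Ω) ∣ k ↔ Monoid.exponent P ∣ k * p := by
      intro k
      rw [Monoid.exponent_dvd_iff_forall_pow_eq_one, Monoid.exponent_dvd_iff_forall_pow_eq_one]
      constructor
      · intro h g
        rw [pow_mul, ← hΩ, ← QuotientGroup.eq_one_iff, QuotientGroup.mk_pow]
        exact h _
      · intro h g
        obtain ⟨g, rfl⟩ := QuotientGroup.mk_surjective g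
        rw [← QuotientGroup.mk_pow, QuotientGroup.eq_one_iff, hΩ, ← pow_mul]
        exact h g
    have he' : p ^ e = p ^ (e - 1) * p := by
      rw [← pow_succ]; congr 1; omega
    rw [hexp, he'] at key
    apply Nat.dvd_antisymm
    · exact (key _).2 dvd_rfl
    · exact Nat.dvd_of_mul_dvd_mul_right hp.pos ((key _).1 dvd_rfl)
  have hle : e - 1 ≤ n - w := by
    have : p ^ (e - 1) ∣ p ^ (n - w) := hexpQ ▸ hQ ▸ Group.exponent_dvd_nat_card
    exact (Nat.pow_dvd_pow_iff_le_right hp.one_lt).1 this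
  have hIH := aux_lcs_quot Ω _ (ih (n - w) (by omega) (e - 1) (P ⧸ Ω) hQ hexpQ (aux_quot hreg Ω))
  set m := n - w - (e - 1) + 1 with hm
  have hucs : MhoOne p (⊤ : Subgroup P) ≤ Subgroup.upperCentralSeries P m := by
    rw [MhoOne, Subgroup.closure_le]
    rintro _ ⟨u, _, rfl⟩
    exact aux_ucs hreg m (fun u hu => hIH hu) m le_rfl u (by simp)
  obtain ⟨v, hv, hUv⟩ : ∃ v ≤ n, Nat.card (P ⧸ MhoOne p (⊤ : Subgroup P)) = p ^ v :=
    (Nat.dvd_prime_pow hp).1 (hcard ▸ Subgroup.card_quotient_dvd_card _)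
  have hvw : v ≤ w := by
    have h1 : Nat.card (P ⧸ Ω) ≤ Nat.card (MhoOne p (⊤ : Subgroup P)) := by
      apply Nat.card_le_card_of_injective
        (fun a : P ⧸ Ω => (⟨a.out ^ p, Subgroup.subset_closure ⟨_, trivial, rfl⟩⟩ :
          MhoOne p (⊤ : Subgroup P)))
      intro a b hab
      have hab' : a.out ^ p = b.out ^ p := congrArg Subtype.val hab
      rw [← QuotientGroup.out_eq' a, ← QuotientGroup.out_eq' b, QuotientGroup.eq, hΩ]
      exact aux_A hreg _ _ (by rw [inv_pow, hab', inv_mul_cancel])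
    have h2 := Subgroup.card_eq_card_quotient_mul_card_subgroup (MhoOne p (⊤ : Subgroup P))
    rw [hUv] at h2
    rw [hmulΩ, hΩw, mul_comm] at h2
    have h0 : 0 < Nat.card (P ⧸ Ω) := Nat.card_pos
    have : p ^ v ≤ p ^ w := by
      by_contra hcon
      push Not at hcon
      have := Nat.mul_lt_mul_of_lt_of_le hcon h1 (by omega)
      omega
    exact (Nat.pow_le_pow_iff_right hp.one_lt).1 this
  have hv2 : 2 ≤ v := by
    by_contra hcon
    have : IsCyclic (P ⧸ MhoOne p (⊤ : Subgroup P)) := by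
      apply isCyclic_of_card_dvd_prime (p := p)
      rw [hUv]
      exact (pow_dvd_pow p (show v ≤ 1 by omega)).trans (by simp)
    exact hcomm (aux_cyc hp P hcard)
  have h3 := (aux_lcs_quot _ _ (aux_class hp v _ hUv hv2)).trans hucs
  exact hanti (by omega) (aux_lcs_ucs _ _ h3)

end Aux

/-- Let `P` be a finite regular `p`-group of order `p ^ n` and
exponent `p ^ e`, so that `f(P) = n - e`.  Then the nilpotency class of `P` is at most
`f(P) + 1`; equivalently the `(f(P)+1)`-st term of the lower central series is trivial. -/
theorem regular_class_bound (p n e : ℕ) (hp : p.Prime) (P : Type) [Group P] [Finite P]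
    (hcard : Nat.card P = p ^ n) (hexp : Monoid.exponent P = p ^ e)
    (hreg : IsRegularPGroup p P) :
    Subgroup.lowerCentralSeries (⊤ : Subgroup P) ((n - e) + 1) = ⊥ := by
  exact aux_main p hp n e P hcard hexp hreg
end

section
/- Let P be a finite p-group with p > f(P) + 1. Then P is a regular p-group. -/
open scoped commutatorElement
/-- Forward difference. -/
def fdiff {G : Type*} [Group G] (g : ℕ → G) : ℕ → G := fun n => (g n)⁻¹ * g (n + 1)

/-- Polynomial sequences with respect to a filtration. -/
def IsPolySeq {G : Type*} [Group G] (F : ℕ → Subgroup G) (k : ℕ) (g : ℕ → G) : Prop :=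
  ∀ j n, (fdiff^[j] g) n ∈ F (k + j)

section poly
variable {G : Type*} [Group G] {F : ℕ → Subgroup G}

theorem isPolySeq_iff {k : ℕ} {g : ℕ → G} :
    IsPolySeq F k g ↔ (∀ n, g n ∈ F k) ∧ IsPolySeq F (k + 1) (fdiff g) := by
  constructor
  · intro h
    refine ⟨fun n => by simpa using h 0 n, fun j n => ?_⟩
    have := h (j + 1) n
    rw [Function.iterate_succ_apply] at this
    convert this using 2
    omega
  · rintro ⟨h0, h1⟩ j n
    cases j with
    | zero => simpa using h0 n
    | succ j =>
      rw [Function.iterate_succ_apply]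
      convert h1 j n using 2
      omega

theorem IsPolySeq.mono (hF : Antitone F) {k l : ℕ} (hkl : l ≤ k) {g : ℕ → G}
    (h : IsPolySeq F k g) : IsPolySeq F l g :=
  fun j n => hF (by omega) (h j n)

theorem fdiff_one : fdiff (1 : ℕ → G) = 1 := by
  funext n; simp [fdiff]

theorem isPolySeq_one (k : ℕ) : IsPolySeq F k 1 := by
  intro j n
  have : fdiff^[j] (1 : ℕ → G) = 1 := Function.iterate_fixed fdiff_one j
  rw [this]; exact one_mem _

/-- The inductive property. -/
def PolyS (F : ℕ → Subgroup G) (m : ℕ) : Prop :=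
  (∀ g h, IsPolySeq F m g → IsPolySeq F m h → IsPolySeq F m (g * h)) ∧
  (∀ i j, i + j = m → ∀ g h, IsPolySeq F i g → IsPolySeq F j h → IsPolySeq F m ⁅g, h⁆)

theorem PolyS.pow {m : ℕ} (S : PolyS F m) {g : ℕ → G} (hg : IsPolySeq F m g) (r : ℕ) :
    IsPolySeq F m (g ^ r) := by
  induction r with
  | zero => simpa using isPolySeq_one m
  | succ r ih => rw [pow_succ]; exact S.1 _ _ ih hg

theorem seq_inv_eq [Finite G] (g : ℕ → G) : g⁻¹ = g ^ (Nat.card G - 1) := by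
  have : 0 < Nat.card G := Nat.card_pos
  rw [inv_eq_iff_mul_eq_one, ← pow_succ', Nat.sub_add_cancel this]
  funext n
  simp

theorem PolyS.inv [Finite G] {m : ℕ} (S : PolyS F m) {g : ℕ → G} (hg : IsPolySeq F m g) :
    IsPolySeq F m g⁻¹ := by
  rw [seq_inv_eq]; exact S.pow hg _

theorem PolyS.conj {m : ℕ} (S : PolyS F m) {u g : ℕ → G}
    (hu : IsPolySeq F 0 u) (hg : IsPolySeq F m g) : IsPolySeq F m (u * g * u⁻¹) := by
  have : u * g * u⁻¹ = ⁅u, g⁆ * g := by simp [commutatorElement_def]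
  rw [this]
  exact S.1 _ _ (S.2 0 m (by omega) _ _ hu hg) hg

theorem PolyS.conj_pow {m : ℕ} (S : PolyS F m) {u g : ℕ → G}
    (hu : IsPolySeq F 0 u) (hg : IsPolySeq F m g) (r : ℕ) :
    IsPolySeq F m (u ^ r * g * (u ^ r)⁻¹) := by
  induction r with
  | zero => simpa using hg
  | succ r ih =>
    have : u ^ (r+1) * g * (u ^ (r+1))⁻¹ = u * (u ^ r * g * (u ^ r)⁻¹) * u⁻¹ := by
      rw [pow_succ']; group
    rw [this]; exact S.conj hu ih

theorem PolyS.conj_inv [Finite G] {m : ℕ} (S : PolyS F m) {u g : ℕ → G}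
    (hu : IsPolySeq F 0 u) (hg : IsPolySeq F m g) : IsPolySeq F m (u⁻¹ * g * u) := by
  have := S.conj_pow hu hg (Nat.card G - 1)
  rwa [← seq_inv_eq, inv_inv] at this

theorem fdiff_mul (g h : ℕ → G) : fdiff (g * h) = (h⁻¹ * fdiff g * h) * fdiff h := by
  funext n; simp [fdiff]; group

theorem fdiff_comm (g h : ℕ → G) : fdiff ⁅g, h⁆ =
    (h * (g * (h⁻¹ * (g⁻¹ * (g * (⁅fdiff g, h⁆ * (h * ⁅fdiff g, fdiff h⁆ * h⁻¹)) * g⁻¹) * g) * h)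
      * g⁻¹) * h⁻¹) * (h * ⁅g, fdiff h⁆ * h⁻¹) := by
  funext n; simp [fdiff, commutatorElement_def]; group

theorem polyS_of_succ [Finite G] (hF : Antitone F)
    (hc : ∀ i j a b, a ∈ F i → b ∈ F j → ⁅a, b⁆ ∈ F (i + j)) {m : ℕ} (S : PolyS F (m + 1)) :
    PolyS F m := by
  refine ⟨fun g h hg hh => ?_, fun i j hij g h hg hh => ?_⟩
  · have hh0 := hh.mono hF (Nat.zero_le m)
    rw [isPolySeq_iff] at hg hh ⊢
    refine ⟨fun n => mul_mem (hg.1 n) (hh.1 n), ?_⟩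
    rw [fdiff_mul]
    exact S.1 _ _ (S.conj_inv hh0 hg.2) hh.2
  · subst hij
    have hg0 := hg.mono hF (Nat.zero_le i)
    have hh0 := hh.mono hF (Nat.zero_le j)
    have hg' := hg
    have hh' := hh
    rw [isPolySeq_iff] at hg' hh' ⊢
    refine ⟨fun n => hc i j _ _ (hg'.1 n) (hh'.1 n), ?_⟩
    rw [fdiff_comm]
    have e1 : IsPolySeq F (i + j + 1) ⁅fdiff g, h⁆ := S.2 (i+1) j (by omega) _ _ hg'.2 hh
    have e2 : IsPolySeq F (i + j + 1) ⁅g, fdiff h⁆ := S.2 i (j+1) (by omega) _ _ hg hh'.2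
    have e3 : IsPolySeq F (i + j + 1) ⁅fdiff g, fdiff h⁆ :=
      S.2 (i+1) j (by omega) _ _ hg'.2 (hh'.2.mono hF (by omega))
    exact S.1 _ _ (S.conj hh0 (S.conj hg0 (S.conj_inv hh0 (S.conj_inv hg0
      (S.conj hg0 (S.1 _ _ e1 (S.conj hh0 e3))))))) (S.conj hh0 e2)

theorem polyS_zero [Finite G] (hF : Antitone F)
    (hc : ∀ i j a b, a ∈ F i → b ∈ F j → ⁅a, b⁆ ∈ F (i + j)) {c : ℕ} (hb : F c = ⊥) :
    PolyS F 0 := by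
  have base : PolyS F c := by
    have key : ∀ g : ℕ → G, (∀ n, g n ∈ F c) → g = 1 := fun g hg => by
      funext n; simpa [hb] using hg n
    refine ⟨fun g h hg hh => ?_, fun i j hij g h hg hh => ?_⟩
    · rw [key g (isPolySeq_iff.1 hg).1, key h (isPolySeq_iff.1 hh).1, one_mul]
      exact isPolySeq_one _
    · rw [key ⁅g, h⁆ (fun n => hij ▸ hc i j _ _ ((isPolySeq_iff.1 hg).1 n) ((isPolySeq_iff.1 hh).1 n))]
      exact isPolySeq_one _
  have : ∀ d ≤ c, PolyS F (c - d) := by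
    intro d
    induction d with
    | zero => intro _; simpa using base
    | succ d ih =>
      intro hd
      apply polyS_of_succ hF hc
      have := ih (by omega)
      rwa [show c - (d+1) + 1 = c - d by omega]
  simpa using this c le_rfl

theorem isPolySeq_choose (hF : Antitone F) (k : ℕ) : ∀ (m : ℕ) (a : G), a ∈ F (k + m) →
    IsPolySeq F m (fun n => a ^ (n.choose k)) := by
  induction k with
  | zero =>
    intro m a ha
    rw [isPolySeq_iff]
    refine ⟨fun n => pow_mem (by simpa using ha) _, ?_⟩
    have : fdiff (fun n => a ^ (n.choose 0)) = 1 := by funext n; simp [fdiff]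
    rw [this]; exact isPolySeq_one _
  | succ k ih =>
    intro m a ha
    rw [isPolySeq_iff]
    refine ⟨fun n => pow_mem (hF (by omega) ha) _, ?_⟩
    have : fdiff (fun n => a ^ (n.choose (k+1))) = fun n => a ^ (n.choose k) := by
      funext n
      simp only [fdiff]
      rw [Nat.choose_succ_succ, add_comm (n.choose k), pow_add, inv_mul_cancel_left]
    rw [this]
    exact ih (m+1) a (by rwa [show k + (m+1) = k + 1 + m by omega])

theorem fdiff_iter_eq (k : ℕ) : ∀ (g : ℕ → G) (s : ℕ), (∀ i < k, g (s + i) = 1) →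
    (fdiff^[k] g) s = g (s + k) := by
  induction k with
  | zero => intro g s _; rfl
  | succ k ih =>
    intro g s h
    rw [Function.iterate_succ_apply, ih]
    · simp only [fdiff]
      rw [h k (by omega)]; simp [add_assoc]
    · intro i hi
      simp only [fdiff]
      rw [h i (by omega), add_assoc, h (i+1) (by omega)]; simp

theorem poly_vanish [Finite G] (hF : Antitone F) {p : ℕ} (hp : p.Prime)
    (hS : PolyS F 0) (hb : F p = ⊥)
    (hpow : ∀ a ∈ F 2, a ^ p = 1) (g : ℕ → G) (hg : IsPolySeq F 0 g) (h0 : g 0 = 1)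
    (h1 : g 1 = 1) : g p = 1 := by
  have main : ∀ d, d + 2 ≤ p → ∃ h : ℕ → G, IsPolySeq F 0 h ∧ h p = g p ∧
      ∀ i < d + 2, h i = 1 := by
    intro d
    induction d with
    | zero =>
      intro _
      refine ⟨g, hg, rfl, fun i hi => ?_⟩
      interval_cases i <;> assumption
    | succ d ih =>
      intro hd
      obtain ⟨h, hh, hhp, hv⟩ := ih (by omega)
      have ha : h (d + 2) ∈ F (d + 2) := by
        have := hh (d+2) 0
        rw [fdiff_iter_eq _ _ _ (by simpa using hv)] at this
        simpa using this
      refine ⟨(fun n => (h (d+2))⁻¹ ^ (n.choose (d+2))) * h,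
        hS.1 _ _ (isPolySeq_choose hF _ _ _ (by simpa using ha)) hh, ?_, ?_⟩
      · obtain ⟨t, ht⟩ := hp.dvd_choose_self (show d + 2 ≠ 0 by omega) (by omega)
        have := hpow _ (hF (show 2 ≤ d + 2 by omega) ha)
        simp only [Pi.mul_apply]
        rw [ht, pow_mul, inv_pow, this, hhp]; simp
      · intro i hi
        simp only [Pi.mul_apply]
        rcases Nat.lt_succ_iff_lt_or_eq.1 (show i < (d+2) + 1 by omega) with h' | h'
        · rw [hv i h', Nat.choose_eq_zero_of_lt h']; simp
        · subst h'; simp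
  obtain ⟨h, hh, hhp, hv⟩ := main (p - 2) (by have := hp.two_le; omega)
  have hp2 : p - 2 + 2 = p := by have := hp.two_le; omega
  rw [hp2] at hv
  have := hh p 0
  rw [fdiff_iter_eq _ _ _ (by simpa using hv)] at this
  simp [hb] at this
  rw [← hhp, this]
end poly

section lcs
open Subgroup

theorem three_subgroups {G : Type*} [Group G] (A B C N : Subgroup G) [N.Normal]
    (h1 : ⁅⁅B, C⁆, A⁆ ≤ N) (h2 : ⁅⁅C, A⁆, B⁆ ≤ N) : ⁅⁅A, B⁆, C⁆ ≤ N := by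
  have key : ∀ K : Subgroup G, K ≤ N ↔ K.map (QuotientGroup.mk' N) = ⊥ := fun K => by
    rw [Subgroup.map_eq_bot_iff, QuotientGroup.ker_mk']
  rw [key] at *
  simp only [map_commutator] at *
  exact commutator_commutator_eq_bot_of_rotate h1 h2

theorem lcs_comm {G : Type*} [Group G] (j : ℕ) : ∀ i,
    ⁅(⊤ : Subgroup G).lowerCentralSeries i, (⊤ : Subgroup G).lowerCentralSeries j⁆ ≤
      (⊤ : Subgroup G).lowerCentralSeries (i + j + 1) := by
  induction j with
  | zero => intro i; exact le_rfl
  | succ j ih =>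
    intro i
    rw [commutator_comm, Subgroup.lowerCentralSeries_succ]
    apply three_subgroups
    · rw [commutator_comm ⊤, ← Subgroup.lowerCentralSeries_succ]
      exact (ih (i+1)).trans (le_of_eq (by congr 1; omega))
    · exact (commutator_mono (ih i) le_rfl)

theorem core_power {G : Type*} [Group G] [Finite G] {p : ℕ} (hp : p.Prime)
    (hb : (⊤ : Subgroup G).lowerCentralSeries (p - 1) = ⊥)
    (hpow : ∀ a ∈ commutator G, a ^ p = 1) (x y : G) : x ^ p * y ^ p = (x * y) ^ p := by
  let F : ℕ → Subgroup G := fun i => (⊤ : Subgroup G).lowerCentralSeries (i - 1)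
  have hF : Antitone F := fun i j h => Subgroup.lowerCentralSeries_antitone _ (by omega)
  have hc : ∀ i j a b, a ∈ F i → b ∈ F j → ⁅a, b⁆ ∈ F (i + j) := by
    intro i j a b ha hb
    have := lcs_comm (j-1) (i-1) (commutator_mem_commutator ha hb)
    exact Subgroup.lowerCentralSeries_antitone _ (by omega) this
  have hS : PolyS F 0 := polyS_zero hF hc (c := p) hb
  have hpw : ∀ a : G, IsPolySeq F 0 (fun n => a ^ n) := fun a => by
    simpa using isPolySeq_choose hF 1 0 a (by simp [F])
  have := poly_vanish hF hp hS hb (fun a ha => hpow a ha)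
    ((fun n => x ^ n) * (fun n => y ^ n) * (fun n => (x * y) ^ n)⁻¹)
    (hS.1 _ _ (hS.1 _ _ (hpw x) (hpw y)) (hS.inv (hpw (x*y)))) (by simp) (by simp)
  simpa [mul_inv_eq_one] using this
end lcs
section bound
open Subgroup

theorem lcs_bot_of_card {G : Type*} [Group G] [Finite G] {p k : ℕ} [hp : Fact p.Prime]
    (hG : IsPGroup p G) (hk : Nat.card (commutator G) ≤ p ^ k) :
    (⊤ : Subgroup G).lowerCentralSeries (k + 1) = ⊥ := by
  have : Group.IsNilpotent G := hG.isNilpotent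
  set L := (⊤ : Subgroup G).lowerCentralSeries with hL
  have hstep : ∀ j, L (j+1) = ⊥ ∨ Nat.card (L (j+2)) * p ≤ Nat.card (L (j+1)) := by
    intro j
    have hle : L (j+2) ≤ L (j+1) := Subgroup.lowerCentralSeries_antitone _ (by omega)
    by_cases he : L (j+2) = L (j+1)
    · left
      have hst : ∀ i, L (j + 1 + i) = L (j+1) := by
        intro i
        induction i with
        | zero => rfl
        | succ i ih =>
          change ⁅L (j+1+i), ⊤⁆ = _
          rw [ih]; exact he
      obtain ⟨n, hn⟩ := Subgroup.nilpotent_iff_lowerCentralSeries.1 this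
      rw [← hst n, eq_bot_iff, ← hn]
      exact Subgroup.lowerCentralSeries_antitone _ (by omega)
    · right
      have h1 := Subgroup.card_mul_index ((L (j+2)).subgroupOf (L (j+1)))
      have h2 : ((L (j+2)).subgroupOf (L (j+1))).index ≠ 1 := by
        rw [Ne, Subgroup.index_eq_one, Subgroup.subgroupOf_eq_top]
        exact fun h => he (le_antisymm hle h)
      obtain ⟨r, hr⟩ := (hG.to_subgroup (L (j+1))).index ((L (j+2)).subgroupOf (L (j+1)))
      have h3 : Nat.card ((L (j+2)).subgroupOf (L (j+1))) = Nat.card (L (j+2)) :=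
        Nat.card_congr (Subgroup.subgroupOfEquivOfLe hle).toEquiv
      rw [h3] at h1
      rw [← h1]
      apply Nat.mul_le_mul_left
      rw [hr] at h2 ⊢
      exact Nat.le_self_pow (fun h => h2 (by simp [h])) p
  have hmain : ∀ j, L (j+1) = ⊥ ∨ Nat.card (L (j+1)) * p ^ j ≤ p ^ k := by
    intro j
    induction j with
    | zero => right; rw [pow_zero, mul_one]; exact hk
    | succ j ih =>
      rcases ih with h | h
      · left; rw [eq_bot_iff, ← h]; exact Subgroup.lowerCentralSeries_antitone _ (by omega)
      · rcases hstep j with h' | h'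
        · left; rw [eq_bot_iff, ← h']; exact Subgroup.lowerCentralSeries_antitone _ (by omega)
        · right
          calc Nat.card (L (j+1+1)) * p ^ (j+1) = (Nat.card (L (j+2)) * p) * p ^ j := by ring
            _ ≤ _ := (Nat.mul_le_mul_right _ h').trans h
  rcases hmain k with h | h
  · exact h
  · have hpos : 0 < p ^ k := pow_pos hp.out.pos k
    have : Nat.card (L (k+1)) ≤ 1 := by
      by_contra hlt
      push Not at hlt
      nlinarith
    exact Subgroup.eq_bot_of_card_le _ this

theorem card_commutator_le {G : Type*} [Group G] [Finite G] {p k : ℕ} [hp : Fact p.Prime]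
    (hG : IsPGroup p G) (hpow : ∀ a ∈ commutator G, a ^ p = 1) (C : Subgroup G)
    (hC : IsCyclic C) (hi : C.index ≤ p ^ k) : Nat.card (commutator G) ≤ p ^ k := by
  have hN : Group.IsNilpotent G := hG.isNilpotent
  rcases eq_or_ne C ⊤ with rfl | hne
  · have : commutator G = ⊥ := by
      rw [_root_.commutator_def, commutator_eq_bot_iff_le_centralizer]
      intro a _ b _
      obtain ⟨g, hg⟩ := hC.exists_generator
      obtain ⟨i, hi⟩ := hg ⟨a, mem_top a⟩
      obtain ⟨j, hj⟩ := hg ⟨b, mem_top b⟩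
      have hi' := congrArg Subtype.val hi
      have hj' := congrArg Subtype.val hj
      simp at hi' hj'
      rw [← hi', ← hj', ← zpow_add, ← zpow_add, add_comm]
    rw [this]; simpa using Nat.one_le_pow _ _ hp.out.pos
  obtain ⟨M, hM, hCM⟩ := (eq_top_or_exists_le_coatom C).resolve_left hne
  have hMn : M.Normal :=
    NormalizerCondition.normal_of_coatom M (Group.normalizerCondition_of_isNilpotent) hM
  have hMi : M.index ≠ 1 := fun h => hM.1 (Subgroup.index_eq_one.1 h)
  obtain ⟨r, hr⟩ := hG.index M
  have hr0 : r ≠ 0 := fun h => hMi (by simp [hr, h])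
  have hpM : p ≤ M.index := hr ▸ Nat.le_self_pow hr0 p
  have hDM : commutator G ≤ M := by
    by_contra hnot
    have htop : M ⊔ commutator G = ⊤ :=
      (hM.le_iff.1 le_sup_left).resolve_right (fun h => hnot (h ▸ le_sup_right))
    have h1 := congrArg (Subgroup.map (QuotientGroup.mk' M)) htop
    have hsurj := QuotientGroup.mk'_surjective M
    have hMb : M.map (QuotientGroup.mk' M) = ⊥ := by
      rw [Subgroup.map_eq_bot_iff, QuotientGroup.ker_mk']
    rw [Subgroup.map_sup, hMb, bot_sup_eq, _root_.commutator_def, map_commutator,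
      Subgroup.map_top_of_surjective _ hsurj, ← _root_.commutator_def] at h1
    have : Nontrivial (G ⧸ M) := by
      rw [← not_subsingleton_iff_nontrivial]
      exact fun h => hM.1 (QuotientGroup.subgroup_eq_top_of_subsingleton M h)
    have hsol : Group.IsSolvable (G ⧸ M) := inferInstance
    exact (Group.IsSolvable.commutator_lt_top_of_nontrivial (G ⧸ M)).ne h1
  have h1 := relIndex_mul_index hCM
  have h2 : C.relIndex (commutator G) ≤ C.relIndex M :=
    relIndex_le_of_le_right hDM (by
      intro h; rw [h, zero_mul] at h1; exact C.index_ne_zero_of_finite h1.symm)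
  have h3 := Subgroup.card_mul_index (C.subgroupOf (commutator G))
  have h4 : Nat.card (C.subgroupOf (commutator G)) ≤ p := by
    have hcy : IsCyclic (C.subgroupOf (commutator G)) := by
      let f : C.subgroupOf (commutator G) →* C :=
        ((commutator G).subtype.comp (C.subgroupOf (commutator G)).subtype).codRestrict C
          (fun a => a.2)
      refine isCyclic_of_injective f (fun a b hab => ?_)
      have := congrArg Subtype.val hab
      exact Subtype.ext (Subtype.ext this)
    obtain ⟨g, hg⟩ := hcy.exists_generator
    rw [← orderOf_eq_card_of_forall_mem_zpowers hg]
    apply orderOf_le_of_pow_eq_one hp.out.pos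
    apply Subtype.ext
    apply Subtype.ext
    exact hpow _ g.1.2
  change _ * C.relIndex (commutator G) = _ at h3
  rw [← h3]
  calc _ ≤ p * C.relIndex M := Nat.mul_le_mul h4 h2
    _ ≤ M.index * C.relIndex M := Nat.mul_le_mul_right _ hpM
    _ = C.index := by rw [← h1, mul_comm]
    _ ≤ _ := hi
end bound
theorem mho_conj {P : Type} [Group P] (p : ℕ) (H : Subgroup P) (u : P) (hu : u ∈ H) (z : P)
    (hz : z ∈ MhoOne p ⁅H, H⁆) : u * z * u⁻¹ ∈ MhoOne p ⁅H, H⁆ := by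
  unfold MhoOne at hz ⊢
  induction hz using Subgroup.closure_induction with
  | mem z hz =>
    obtain ⟨a, ha, rfl⟩ := hz
    apply Subgroup.subset_closure
    refine ⟨u * a * u⁻¹, ?_, by rw [conj_pow]⟩
    have h1 := Subgroup.normalizer_commutator_ge_left (H₁ := H) (H₂ := H) hu
    exact (Subgroup.mem_normalizer_iff.1 h1 a).1 ha
  | one => simp
  | mul a b _ _ h1 h2 =>
    have : u * (a * b) * u⁻¹ = (u * a * u⁻¹) * (u * b * u⁻¹) := by group
    rw [this]; exact mul_mem h1 h2
  | inv a _ h1 =>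
    have : u * a⁻¹ * u⁻¹ = (u * a * u⁻¹)⁻¹ := by group
    rw [this]; exact inv_mem h1

theorem exists_cyclic (p n e : ℕ) (hp : p.Prime) (P : Type) [Group P] [Finite P]
    (hcard : Nat.card P = p ^ n) (hexp : Monoid.exponent P = p ^ e) :
    ∃ C : Subgroup P, IsCyclic C ∧ C.index = p ^ (n - e) := by
  have hc : ∃ c : P, orderOf c = p ^ e := by
    cases e with
    | zero => exact ⟨1, by simp⟩
    | succ e =>
      by_contra hno
      push Not at hno
      have : Monoid.exponent P ∣ p ^ e := by
        apply Monoid.exponent_dvd_of_forall_pow_eq_one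
        intro g
        have h1 : orderOf g ∣ p ^ (e+1) := hexp ▸ Monoid.order_dvd_exponent g
        obtain ⟨k, hk, hk'⟩ := (Nat.dvd_prime_pow hp).1 h1
        have : k ≠ e + 1 := fun h => hno g (by rw [hk', h])
        rw [← orderOf_dvd_iff_pow_eq_one, hk']
        exact pow_dvd_pow _ (by omega)
      rw [hexp, Nat.pow_dvd_pow_iff_le_right hp.one_lt] at this
      omega
  obtain ⟨c, hc⟩ := hc
  refine ⟨Subgroup.zpowers c, inferInstance, ?_⟩
  have h1 := Subgroup.card_mul_index (Subgroup.zpowers c)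
  rw [Nat.card_zpowers, hc, hcard] at h1
  have hle : e ≤ n := (Nat.pow_dvd_pow_iff_le_right hp.one_lt).1 ⟨_, h1.symm⟩
  apply Nat.eq_of_mul_eq_mul_left (pow_pos hp.pos e)
  rw [h1, ← pow_add]; congr 1; omega

/-- Let `P` be a finite `p`-group of order `p ^ n` and exponent `p ^ e`,
so that `f(P) = n - e`.  If `p > f(P) + 1` then `P` is a regular `p`-group. -/
theorem regular_of_large_prime (p n e : ℕ) (hp : p.Prime) (P : Type) [Group P] [Finite P]
    (hcard : Nat.card P = p ^ n) (hexp : Monoid.exponent P = p ^ e)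
    (hpf : p > (n - e) + 1) :
    IsRegularPGroup p P := by
  have hfact : Fact p.Prime := ⟨hp⟩
  have hPp : IsPGroup p P := IsPGroup.of_card hcard
  obtain ⟨C, hC, hCi⟩ := exists_cyclic p n e hp P hcard hexp
  intro x y
  set H := Subgroup.closure {x, y} with hH
  have hx : x ∈ H := Subgroup.subset_closure (by simp)
  have hy : y ∈ H := Subgroup.subset_closure (by simp)
  let N : Subgroup H := (MhoOne p ⁅H, H⁆).subgroupOf H
  have hN : N.Normal := ⟨fun z hz u => by
    rw [Subgroup.mem_subgroupOf] at hz ⊢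
    exact mho_conj p H u u.2 z hz⟩
  let π : H →* H ⧸ N := QuotientGroup.mk' N
  have hπ : Function.Surjective π := QuotientGroup.mk'_surjective N
  have hQ : IsPGroup p (H ⧸ N) := (hPp.to_subgroup H).to_quotient N
  have hpow : ∀ a ∈ commutator (H ⧸ N), a ^ p = 1 := by
    intro a ha
    rw [commutator_def, ← Subgroup.map_top_of_surjective π hπ, ← Subgroup.map_commutator] at ha
    obtain ⟨h, hh, rfl⟩ := ha
    rw [← map_pow]
    apply (QuotientGroup.eq_one_iff _).2
    rw [Subgroup.mem_subgroupOf]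
    apply Subgroup.subset_closure
    refine ⟨h, ?_, rfl⟩
    rw [← Subgroup.map_subtype_commutator]
    exact ⟨h, hh, rfl⟩
  let C' : Subgroup (H ⧸ N) := (C.subgroupOf H).map π
  have hC1 : IsCyclic (C.subgroupOf H) := by
    let f : C.subgroupOf H →* C :=
      (H.subtype.comp (C.subgroupOf H).subtype).codRestrict C (fun a => a.2)
    refine isCyclic_of_injective f (fun a b hab => ?_)
    have := congrArg Subtype.val hab
    exact Subtype.ext (Subtype.ext this)
  have hC' : IsCyclic C' :=
    isCyclic_of_surjective (π.subgroupMap (C.subgroupOf H)) (π.subgroupMap_surjective _)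
  have hi : C'.index ≤ p ^ (p - 2) := by
    have h1 : C'.index ≤ (C.subgroupOf H).index :=
      Nat.le_of_dvd (Nat.pos_of_ne_zero (Subgroup.index_ne_zero_of_finite))
        (Subgroup.index_map_dvd _ hπ)
    have h2 : C.relIndex H ≤ C.relIndex ⊤ :=
      Subgroup.relIndex_le_of_le_right le_top
        (by rw [Subgroup.relIndex_top_right]; exact Subgroup.index_ne_zero_of_finite)
    rw [Subgroup.relIndex_top_right, hCi] at h2
    exact h1.trans (h2.trans (Nat.pow_le_pow_right hp.pos (by omega)))
  have hb := lcs_bot_of_card hQ (card_commutator_le hQ hpow C' hC' hi)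
  rw [show p - 2 + 1 = p - 1 by omega] at hb
  have hfin := core_power hp hb hpow (π ⟨x, hx⟩) (π ⟨y, hy⟩)
  rw [← map_mul, ← map_pow, ← map_pow, ← map_pow, ← map_mul] at hfin
  have hmem := QuotientGroup.eq.1 hfin.symm
  rw [Subgroup.mem_subgroupOf] at hmem
  exact ⟨_, hmem, by simp⟩
end
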